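/- arXiv:1510.04144 — 8 statements merged into one kernel-verified Lean document; each statement's English description precedes it below -/
import Mathlib

section
/- Let r ≥ 2 and let Γ be the free group of rank r. If Δ₀ is a finitely generated subgroup of Γ, then there exist n ≥ 1 and an injective group homomorphism ρ : Γ → GL(n, ℂ) such that Δ₀ is closed in the Zariski topology associated to ρ; that is, for every γ ∈ Γ with γ ∉ Δ₀ there exists a polynomial P in the n² matrix-entry variables with complex coefficients such that P vanishes at the matrix ρ(δ) for every δ ∈ Δ₀ but P(ρ(γ)) ≠ 0. -/
/-- Evaluate a polynomial in the `n²` matrix-entry variables at a matrix in `GL(n, ℂ)`. -/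
noncomputable def evalAtGL {n : ℕ} (A : GL (Fin n) ℂ)
    (P : MvPolynomial (Fin n × Fin n) ℂ) : ℂ :=
  MvPolynomial.eval (fun p => (A : Matrix (Fin n) (Fin n) ℂ) p.1 p.2) P

/-- The Schottky generators. -/
noncomputable def schottky (a b : ℂ) : (Matrix (Fin 2) (Fin 2) ℂ)ˣ where
  val := !![b, -a * b - 1; 1, -a]
  inv := !![-a, a * b + 1; -1, b]
  val_inv := by
    ext i j
    fin_cases i <;> fin_cases j <;> simp <;> ring
  inv_val := by
    ext i j
    fin_cases i <;> fin_cases j <;> simp <;> ring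

lemma disc_disj {a b p q : ℂ} (hab : 3 ≤ ‖a - b‖) (h1 : ‖p - a * q‖ ≤ ‖q‖)
    (h2 : ‖p - b * q‖ ≤ ‖q‖) : p = 0 ∧ q = 0 := by
  have h : ‖(a - b) * q‖ ≤ ‖p - b * q‖ + ‖p - a * q‖ := by
    have : (a - b) * q = (p - b * q) - (p - a * q) := by ring
    rw [this]; exact norm_sub_le _ _
  rw [norm_mul] at h
  have hq : ‖q‖ = 0 := by nlinarith [norm_nonneg q]
  have hq' : q = 0 := norm_eq_zero.mp hq
  subst hq'
  simp at h1
  exact ⟨h1, rfl⟩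

/-- Ping-pong discs. -/
def pdisc (a : ℂ) : Set {v : Fin 2 → ℂ // v ≠ 0} :=
  {v | ‖v.1 0 - a * v.1 1‖ ≤ ‖v.1 1‖}

lemma pdisc_disj {a b : ℂ} (hab : 3 ≤ ‖a - b‖) : Disjoint (pdisc a) (pdisc b) := by
  rw [Set.disjoint_left]
  intro v h1 h2
  obtain ⟨hp, hq⟩ := disc_disj hab h1 h2
  apply v.2
  ext i
  fin_cases i
  · exact hp
  · exact hq

lemma schottky_mem (a b : ℂ) (v : {v : Fin 2 → ℂ // v ≠ 0}) (hv : v ∈ (pdisc a)ᶜ) :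
    schottky a b • v ∈ pdisc b := by
  have hv' : ‖v.1 1‖ < ‖v.1 0 - a * v.1 1‖ := not_le.mp hv
  have h0 : (schottky a b • v).1 0 = b * v.1 0 + (-a * b - 1) * v.1 1 := by
    change ((!![b, -a * b - 1; 1, -a] : Matrix (Fin 2) (Fin 2) ℂ).mulVec v.1) 0 = _
    simp [Matrix.mulVec, dotProduct, Fin.sum_univ_two]
  have h1 : (schottky a b • v).1 1 = v.1 0 - a * v.1 1 := by
    change ((!![b, -a * b - 1; 1, -a] : Matrix (Fin 2) (Fin 2) ℂ).mulVec v.1) 1 = _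
    simp [Matrix.mulVec, dotProduct, Fin.sum_univ_two]
    ring
  change ‖(schottky a b • v).1 0 - b * (schottky a b • v).1 1‖ ≤ ‖(schottky a b • v).1 1‖
  rw [h0, h1]
  have : b * v.1 0 + (-a * b - 1) * v.1 1 - b * (v.1 0 - a * v.1 1) = -v.1 1 := by ring
  rw [this, norm_neg]
  exact hv'.le

lemma schottky_inv_mem (a b : ℂ) (v : {v : Fin 2 → ℂ // v ≠ 0}) (hv : v ∈ (pdisc b)ᶜ) :
    (schottky a b)⁻¹ • v ∈ pdisc a := by
  have hv' : ‖v.1 1‖ < ‖v.1 0 - b * v.1 1‖ := not_le.mp hv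
  have h0 : ((schottky a b)⁻¹ • v).1 0 = -a * v.1 0 + (a * b + 1) * v.1 1 := by
    change ((!![-a, a * b + 1; -1, b] : Matrix (Fin 2) (Fin 2) ℂ).mulVec v.1) 0 = _
    simp [Matrix.mulVec, dotProduct, Fin.sum_univ_two]
  have h1 : ((schottky a b)⁻¹ • v).1 1 = -(v.1 0 - b * v.1 1) := by
    change ((!![-a, a * b + 1; -1, b] : Matrix (Fin 2) (Fin 2) ℂ).mulVec v.1) 1 = _
    simp [Matrix.mulVec, dotProduct, Fin.sum_univ_two]
    ring
  change ‖((schottky a b)⁻¹ • v).1 0 - a * ((schottky a b)⁻¹ • v).1 1‖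
    ≤ ‖((schottky a b)⁻¹ • v).1 1‖
  rw [h0, h1]
  have : -a * v.1 0 + (a * b + 1) * v.1 1 - a * -(v.1 0 - b * v.1 1) = v.1 1 := by ring
  rw [this, norm_neg]
  exact hv'.le

lemma norm_int_sub (x y : ℤ) (h : 1 ≤ |x - y|) : 3 ≤ ‖(3 * x : ℂ) - 3 * y‖ := by
  have : (3 * x : ℂ) - 3 * y = ((3 * (x - y) : ℤ) : ℂ) := by push_cast; ring
  rw [this, Complex.norm_intCast]
  rw [Int.cast_mul, abs_mul]
  have h' : (1 : ℝ) ≤ ((|x - y| : ℤ) : ℝ) := by exact_mod_cast h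
  rw [Int.cast_abs] at h'
  norm_num at h' ⊢
  linarith

lemma exists_faithful (r : ℕ) (hr : 2 ≤ r) :
    ∃ σ : FreeGroup (Fin r) →* (Matrix (Fin 2) (Fin 2) ℂ), Function.Injective σ := by
  have : Nontrivial (Fin r) := Fin.nontrivial_iff_two_le.mpr hr
  let A : Fin r → ℂ := fun i => 3 * ((2 * (i : ℤ) : ℤ) : ℂ)
  let B : Fin r → ℂ := fun i => 3 * ((2 * (i : ℤ) + 1 : ℤ) : ℂ)
  have key : Function.Injective (FreeGroup.lift fun i => schottky (A i) (B i)) := by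
    apply FreeGroup.injective_lift_of_ping_pong (α := {v : Fin 2 → ℂ // v ≠ 0}) _
      (fun i => pdisc (B i)) (fun i => pdisc (A i))
    · intro i
      refine ⟨⟨![B i, 1], fun h => by simpa using congrFun h 1⟩, ?_⟩
      simp [pdisc]
    · intro i j hij
      apply pdisc_disj
      apply norm_int_sub
      have : (i : ℤ) ≠ j := by simpa [Fin.ext_iff] using hij
      apply Int.one_le_abs
      omega
    · intro i j hij
      apply pdisc_disj
      apply norm_int_sub
      have : (i : ℤ) ≠ j := by simpa [Fin.ext_iff] using hij
      apply Int.one_le_abs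
      omega
    · intro i j
      apply pdisc_disj
      apply norm_int_sub
      apply Int.one_le_abs
      omega
    · rintro i _ ⟨v, hv, rfl⟩
      exact schottky_mem _ _ v hv
    · rintro i _ ⟨v, hv, rfl⟩
      exact schottky_inv_mem _ _ v hv
  exact ⟨(Units.coeHom _).comp _, Units.val_injective.comp key⟩

lemma exists_perm {G X : Type*} [Group G] [MulAction G X] (V : Finset X) (x : G) :
    ∃ π : Equiv.Perm V, ∀ v : V, x • v.1 ∈ V → (π v).1 = x • v.1 := by
  classical
  let e : {v : V // x • v.1 ∈ V} ≃ {v : V // x⁻¹ • v.1 ∈ V} :=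
    { toFun := fun v => ⟨⟨x • v.1.1, v.2⟩, by simp⟩
      invFun := fun v => ⟨⟨x⁻¹ • v.1.1, v.2⟩, by simp⟩
      left_inv := fun v => by simp
      right_inv := fun v => by simp }
  refine ⟨e.extendSubtype, fun v hv => ?_⟩
  rw [e.extendSubtype_apply_of_mem v hv]
  rfl

lemma exists_perm_cocycle {G X : Type*} [Group G] [MulAction G X] [MulAction.IsPretransitive G X]
    (V : Finset X) (x : G) :
    ∃ (π : Equiv.Perm V) (c : V → G), ∀ v : V, c v • v.1 = (π v).1 ∧
      (x • v.1 ∈ V → c v = x) := by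
  obtain ⟨π, hπ⟩ := exists_perm V x
  have : ∀ v : V, ∃ g : G, g • v.1 = (π v).1 ∧ (x • v.1 ∈ V → g = x) := by
    intro v
    by_cases h : x • v.1 ∈ V
    · exact ⟨x, (hπ v h).symm, fun _ => rfl⟩
    · obtain ⟨g, hg⟩ := MulAction.exists_smul_eq G v.1 (π v).1
      exact ⟨g, hg, fun h' => absurd h' h⟩
  choose c hc using this
  exact ⟨π, c, hc⟩

section col
variable {G R V : Type*} [Group G] [Ring R] [Fintype V] [DecidableEq V] (σ : G →* R)

/-- Column `v` of `M` is `σ g` placed at `w`. -/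
def IsCol (M : Matrix V V R) (v w : V) (g : G) : Prop :=
  ∀ u, M u v = if u = w then σ g else 0

lemma IsCol.mul {M N : Matrix V V R} {v w z : V} {g h : G} (hN : IsCol σ N w z h)
    (hM : IsCol σ M v w g) : IsCol σ (N * M) v z (h * g) := by
  intro u
  rw [Matrix.mul_apply, Finset.sum_eq_single w]
  · rw [hM w, hN u, if_pos rfl]; split_ifs <;> simp
  · intro b _ hb
    rw [hM b, if_neg hb, mul_zero]
  · simp

lemma IsCol.one (v : V) : IsCol σ (1 : Matrix V V R) v v 1 := by
  intro u
  rw [Matrix.one_apply, map_one]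

lemma IsCol.inv {M N : Matrix V V R} {v w : V} {g : G} (hNM : N * M = 1)
    (hM : IsCol σ M v w g) : IsCol σ N w v g⁻¹ := by
  intro u
  have h : (N * M) u v = N u w * σ g := by
    rw [Matrix.mul_apply, Finset.sum_eq_single w]
    · rw [hM w, if_pos rfl]
    · intro b _ hb
      rw [hM b, if_neg hb, mul_zero]
    · simp
  have h1 : N u w = N u w * σ g * σ g⁻¹ := by
    rw [mul_assoc, ← map_mul, mul_inv_cancel, map_one, mul_one]
  rw [h1, ← h, hNM, Matrix.one_apply]
  split_ifs <;> simp

/-- Monomial matrix. -/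
def monoMat (π : Equiv.Perm V) (c : V → G) : Matrix V V R :=
  Matrix.of fun u v => if u = π v then σ (c v) else 0

lemma monoMat_col (π : Equiv.Perm V) (c : V → G) (v : V) :
    IsCol σ (monoMat σ π c) v (π v) (c v) := fun _ => rfl

lemma eq_one_of_col {M : Matrix V V R} (h : ∀ v, IsCol σ M v v 1) : M = 1 := by
  ext u v
  rw [h v u, Matrix.one_apply, map_one]

/-- Monomial matrix as a unit. -/
def monoUnit (π : Equiv.Perm V) (c : V → G) : (Matrix V V R)ˣ where
  val := monoMat σ π c
  inv := monoMat σ π⁻¹ (fun v => (c (π⁻¹ v))⁻¹)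
  val_inv := by
    apply eq_one_of_col σ
    intro v
    have := (monoMat_col σ π c (π⁻¹ v)).mul σ (monoMat_col σ π⁻¹ (fun v => (c (π⁻¹ v))⁻¹) v)
    simpa using this
  inv_val := by
    apply eq_one_of_col σ
    intro v
    have := (monoMat_col σ π⁻¹ (fun v => (c (π⁻¹ v))⁻¹) (π v)).mul σ (monoMat_col σ π c v)
    simpa using this

end col

lemma exists_blockrep {r : ℕ} {R : Type*} [Ring R] [Nontrivial R] (σ : FreeGroup (Fin r) →* R)
    (hσ : Function.Injective σ) (Δ : Subgroup (FreeGroup (Fin r))) (hΔ : Δ.FG) :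
    ∃ (V : Type) (_ : Fintype V) (_ : DecidableEq V) (v₀ : V)
      (Φ : FreeGroup (Fin r) →* Matrix V V R),
      ∀ γ, γ ∈ Δ ↔ Φ γ v₀ v₀ = σ γ := by
  classical
  obtain ⟨S, hS⟩ := hΔ
  let X := FreeGroup (Fin r) ⧸ Δ
  let x₀ : X := ((1 : FreeGroup (Fin r)) : X)
  let V : Finset X := insert x₀ (S.biUnion fun s =>
    (s.toWord.tails.map fun L => FreeGroup.mk L • x₀).toFinset)
  choose π c hc using fun i : Fin r => exists_perm_cocycle V (FreeGroup.of i)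
  let Φu : FreeGroup (Fin r) →* (Matrix V V R)ˣ :=
    FreeGroup.lift fun i => monoUnit σ (π i) (c i)
  let Φ : FreeGroup (Fin r) →* Matrix V V R := (Units.coeHom _).comp Φu
  have hgen : ∀ i v, IsCol σ (Φ (FreeGroup.of i)) v (π i v) (c i v) := by
    intro i v
    have : Φ (FreeGroup.of i) = monoMat σ (π i) (c i) := by
      simp [Φ, Φu, monoUnit]
    rw [this]
    exact monoMat_col σ _ _ v
  have hinv : ∀ g v w h, IsCol σ (Φ g) v w h → IsCol σ (Φ g⁻¹) w v h⁻¹ := by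
    intro g v w h hh
    refine IsCol.inv σ ?_ hh
    rw [← map_mul, inv_mul_cancel, map_one]
  have hall : ∀ g : FreeGroup (Fin r), ∀ v : V, ∃ (w : V) (h : FreeGroup (Fin r)),
      h • v.1 = w.1 ∧ IsCol σ (Φ g) v w h := by
    intro g
    induction g using FreeGroup.induction_on with
    | C1 => exact fun v => ⟨v, 1, one_smul _ _, by rw [map_one]; exact IsCol.one σ v⟩
    | of i => exact fun v => ⟨π i v, c i v, (hc i v).1, hgen i v⟩
    | inv_of i _ =>
      intro v
      have h1 := hinv _ _ _ _ (hgen i ((π i)⁻¹ v))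
      have h2 := (hc i ((π i)⁻¹ v)).1
      have h0 : π i ((π i)⁻¹ v) = v := by simp
      rw [h0] at h1 h2
      exact ⟨_, _, by rw [← h2, inv_smul_smul], h1⟩
    | mul x y hx hy =>
      intro v
      obtain ⟨w, h, h1, h2⟩ := hy v
      obtain ⟨z, k, h3, h4⟩ := hx w
      exact ⟨z, k * h, by rw [mul_smul, h1, h3], by rw [map_mul]; exact h4.mul σ h2⟩
  have hpos : ∀ i (v w : V), FreeGroup.of i • v.1 = w.1 →
      IsCol σ (Φ (FreeGroup.of i)) v w (FreeGroup.of i) := by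
    intro i v w h
    have h1 := hgen i v
    have h2 := hc i v
    have h3 := h2.2 (h ▸ w.2)
    rw [h3] at h1 h2
    have : π i v = w := Subtype.ext (h2.1.symm.trans h)
    rwa [this] at h1
  have hneg : ∀ i (v w : V), (FreeGroup.of i)⁻¹ • v.1 = w.1 →
      IsCol σ (Φ (FreeGroup.of i)⁻¹) v w (FreeGroup.of i)⁻¹ := by
    intro i v w h
    apply hinv
    apply hpos
    rw [← h, smul_inv_smul]
  let v₀ : V := ⟨x₀, Finset.mem_insert_self _ _⟩
  have hword : ∀ L : List (Fin r × Bool), (∀ L', L' <:+ L → FreeGroup.mk L' • x₀ ∈ V) →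
      ∀ w : V, FreeGroup.mk L • x₀ = w.1 → IsCol σ (Φ (FreeGroup.mk L)) v₀ w (FreeGroup.mk L) := by
    intro L
    induction L with
    | nil =>
      intro _ w hw
      have : v₀ = w := by
        apply Subtype.ext
        rw [← hw, ← FreeGroup.one_eq_mk, one_smul]
      subst this
      rw [← FreeGroup.one_eq_mk, map_one]
      exact IsCol.one σ _
    | cons p L ih =>
      intro hL w hw
      have ih' := ih (fun L' h => hL L' (h.trans (List.suffix_cons p L)))
        ⟨FreeGroup.mk L • x₀, hL L (List.suffix_cons p L)⟩ rfl
      have hsplit : FreeGroup.mk (p :: L) = FreeGroup.mk [p] * FreeGroup.mk L := by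
        rw [FreeGroup.mul_mk]; rfl
      rw [hsplit, map_mul]
      rw [hsplit, mul_smul] at hw
      refine IsCol.mul σ ?_ ih'
      obtain ⟨i, b⟩ := p
      cases b
      · have : FreeGroup.mk [(i, false)] = (FreeGroup.of i)⁻¹ := rfl
        rw [this] at hw ⊢
        exact hneg i _ w hw
      · exact hpos i _ w hw
  have hx₀ : ∀ γ : FreeGroup (Fin r), γ • x₀ = x₀ ↔ γ ∈ Δ := by
    intro γ
    have : γ • x₀ = ((γ : FreeGroup (Fin r)) : X) := by
      simp [x₀, X]
    rw [this, eq_comm, QuotientGroup.eq]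
    simp
  have hmem : ∀ γ ∈ Δ, IsCol σ (Φ γ) v₀ v₀ γ := by
    intro γ hγ
    rw [← hS] at hγ
    induction hγ using Subgroup.closure_induction with
    | mem s hs =>
      have h := hword s.toWord (fun L' hL' => by
        apply Finset.mem_insert_of_mem
        rw [Finset.mem_biUnion]
        refine ⟨s, hs, ?_⟩
        rw [List.mem_toFinset, List.mem_map]
        exact ⟨L', (List.mem_tails _ _).2 hL', rfl⟩) v₀ (by
          rw [FreeGroup.mk_toWord]
          exact (hx₀ s).2 (hS ▸ Subgroup.subset_closure hs))
      rwa [FreeGroup.mk_toWord] at h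
    | one => rw [map_one]; exact IsCol.one σ _
    | mul x y _ _ hx hy => rw [map_mul]; exact hx.mul σ hy
    | inv x _ hx => exact hinv _ _ _ _ hx
  refine ⟨V, inferInstance, inferInstance, v₀, Φ, fun γ => ?_⟩
  constructor
  · intro h
    rw [hmem γ h v₀, if_pos rfl]
  · intro h
    obtain ⟨w, k, h1, h2⟩ := hall γ v₀
    rw [h2 v₀] at h
    split_ifs at h with hw
    · have := hσ h
      rw [← hx₀, ← this]
      rw [← hw] at h1
      exact h1
    · exfalso
      have h3 : σ γ * σ γ⁻¹ = 1 := by rw [← map_mul, mul_inv_cancel, map_one]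
      rw [← h, zero_mul] at h3
      exact zero_ne_one h3

theorem free_subgroup_zariski_closed (r : ℕ) (hr : 2 ≤ r)
    (Δ₀ : Subgroup (FreeGroup (Fin r))) (hΔ₀ : Δ₀.FG) :
    ∃ (n : ℕ) (ρ : FreeGroup (Fin r) →* GL (Fin n) ℂ), 1 ≤ n ∧
      Function.Injective ρ ∧
      ∀ γ : FreeGroup (Fin r), γ ∉ Δ₀ →
        ∃ P : MvPolynomial (Fin n × Fin n) ℂ,
          (∀ δ ∈ Δ₀, evalAtGL (ρ δ) P = 0) ∧ evalAtGL (ρ γ) P ≠ 0 := by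
  classical
  obtain ⟨σ, hσ⟩ := exists_faithful r hr
  obtain ⟨V, _, _, v₀, Φ, hΦ⟩ := exists_blockrep σ hσ Δ₀ hΔ₀
  let I := (V × Fin 2) ⊕ Fin 2
  let Ψ : FreeGroup (Fin r) →* Matrix I I ℂ :=
    { toFun := fun γ => Matrix.fromBlocks (Matrix.compRingEquiv V (Fin 2) ℂ (Φ γ)) 0 0 (σ γ)
      map_one' := by
        rw [map_one, map_one, map_one, Matrix.fromBlocks_one]
      map_mul' := fun x y => by
        rw [map_mul, map_mul, map_mul, Matrix.fromBlocks_multiply]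
        simp }
  let e := Fintype.equivFin I
  let Ψ' : FreeGroup (Fin r) →* Matrix (Fin (Fintype.card I)) (Fin (Fintype.card I)) ℂ :=
    (Matrix.reindexRingEquiv ℂ e : Matrix I I ℂ →* _).comp Ψ
  have hΨ' : ∀ γ i j, Ψ' γ (e i) (e j) = Ψ γ i j := by
    intro γ i j
    simp [Ψ']
  have hΨσ : ∀ γ i j, Ψ γ (Sum.inr i) (Sum.inr j) = σ γ i j := fun _ _ _ => rfl
  have hΨΦ : ∀ γ i j, Ψ γ (Sum.inl (v₀, i)) (Sum.inl (v₀, j)) = Φ γ v₀ v₀ i j :=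
    fun _ _ _ => rfl
  refine ⟨Fintype.card I, Ψ'.toHomUnits, Fintype.card_pos_iff.2 ⟨Sum.inr 0⟩, ?_, ?_⟩
  · intro x y hxy
    apply hσ
    have h : Ψ' x = Ψ' y := congrArg Units.val hxy
    ext i j
    rw [← hΨσ, ← hΨσ, ← hΨ', ← hΨ', h]
  · intro γ hγ
    rw [hΦ] at hγ
    have : ∃ i j, Φ γ v₀ v₀ i j ≠ σ γ i j := by
      by_contra hcon
      push Not at hcon
      exact hγ (Matrix.ext hcon)
    obtain ⟨i, j, hij⟩ := this
    have hev : ∀ g, evalAtGL (Ψ'.toHomUnits g)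
        (MvPolynomial.X (e (Sum.inl (v₀, i)), e (Sum.inl (v₀, j))) -
          MvPolynomial.X (e (Sum.inr i), e (Sum.inr j))) = Φ g v₀ v₀ i j - σ g i j := by
      intro g
      rw [← hΨσ, ← hΨΦ, ← hΨ', ← hΨ']
      simp [evalAtGL]
    refine ⟨_, fun δ hδ => (hev δ).trans ?_, ?_⟩
    · rw [(hΦ δ).1 hδ, sub_self]
    · rw [hev]
      exact sub_ne_zero.2 hij
end

section
/- Let r ≥ 2, let Γ be the free group of rank r with its standard free generating set X, and let Δ₀ be a finitely generated subgroup of Γ. Then there exist constants C > 0 and D > 0 such that for every γ ∈ Γ with γ ∉ Δ₀ there exist a finite group Q and a homomorphism φ : Γ → Q with φ(γ) ∉ φ(Δ₀) and |Q| ≤ C·‖γ‖_X^D; moreover, the subgroup Λ = Δ₀ ⊔ ker(φ) (the join of Δ₀ and the kernel of φ) satisfies: Δ₀ ≤ Λ, γ ∉ Λ, the index [Γ : Λ] ≤ |Q|, and the index of the normal core of Λ in Γ is at most |Q|. -/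
/-- The word norm of `γ` with respect to a generating set `X`: the least `m` such that
`γ` is a product of `m` elements of `X ∪ X⁻¹`. -/
noncomputable def wordNorm {Γ : Type*} [Group Γ] (X : Set Γ) (γ : Γ) : ℕ :=
  sInf {m | ∃ l : List Γ, l.length = m ∧ (∀ x ∈ l, x ∈ X ∪ X⁻¹) ∧ l.prod = γ}

namespace FES

lemma exists_not_dvd (n : ℕ) (N : ℕ) (hN : N ≠ 0) (h : N < 2 ^ n) :
    ∃ m, 1 ≤ m ∧ m ≤ 2 * n ∧ ¬ m ∣ N := by
  by_contra! hc
  have hdvd : Nat.centralBinom n ∣ N := by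
    rw [← Nat.factorization_le_iff_dvd (Nat.centralBinom_ne_zero n) hN]
    intro p
    by_cases hp : p.Prime
    · by_cases hn : n = 0
      · subst hn; simp
      refine (hp.pow_dvd_iff_le_factorization hN).1 ?_
      refine hc _ (Nat.pos_of_ne_zero (pow_ne_zero _ hp.ne_zero)) ?_
      exact Nat.pow_factorization_choose_le (by omega)
    · simp [Nat.factorization_eq_zero_of_not_prime _ hp]
  have h1 := Nat.le_of_dvd (Nat.pos_of_ne_zero hN) hdvd
  have h2 : 2 ^ n ≤ Nat.centralBinom n := by
    clear * -
    induction n with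
    | zero => simp
    | succ k ih =>
      have := Nat.succ_mul_centralBinom_succ k
      have h3 : (k + 1) * (2 ^ (k+1)) ≤ (k+1) * Nat.centralBinom (k+1) := by
        rw [this, pow_succ]
        nlinarith
      exact Nat.le_of_mul_le_mul_left h3 (by omega)
  omega

/-- the Schottky generator -/
def gen (p q : ℤ) : (Matrix (Fin 2) (Fin 2) ℤ)ˣ where
  val := !![p, -1 - p * q; 1, -q]
  inv := !![-q, 1 + p * q; -1, p]
  val_inv := by ext i j; fin_cases i <;> fin_cases j <;> simp <;> ring
  inv_val := by ext i j; fin_cases i <;> fin_cases j <;> simp <;> ring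

instance actNZ : MulAction (Matrix (Fin 2) (Fin 2) ℤ)ˣ {v : Fin 2 → ℤ // v ≠ 0} where
  smul g v := ⟨g.val.mulVec v.1, fun h => v.2 (by
    have : (g⁻¹).val.mulVec (g.val.mulVec v.1) = v.1 := by
      rw [Matrix.mulVec_mulVec, ← Units.val_mul]; simp
    rw [← this, h, Matrix.mulVec_zero])⟩
  one_smul v := Subtype.ext (by
    change (1 : (Matrix (Fin 2) (Fin 2) ℤ)ˣ).val.mulVec v.1 = v.1
    simp)
  mul_smul g h v := Subtype.ext (by
    change (g * h).val.mulVec v.1 = g.val.mulVec (h.val.mulVec v.1)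
    rw [Matrix.mulVec_mulVec, Units.val_mul])

lemma smul_val (g : (Matrix (Fin 2) (Fin 2) ℤ)ˣ) (v : {v : Fin 2 → ℤ // v ≠ 0}) :
    (g • v).1 = g.val.mulVec v.1 := rfl

/-- ping-pong domains -/
def dom (p : ℤ) : Set {v : Fin 2 → ℤ // v ≠ 0} := {v | |v.1 0 - p * v.1 1| ≤ |v.1 1|}

lemma dom_disj (p q : ℤ) (h : 3 ≤ |p - q|) : Disjoint (dom p) (dom q) := by
  rw [Set.disjoint_left]
  intro v hp hq
  simp only [dom, Set.mem_ofPred_eq] at hp hq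
  by_cases hy : v.1 1 = 0
  · apply v.2
    have : v.1 0 = 0 := by simpa [hy] using hp
    ext i; fin_cases i <;> simp [this, hy]
  · have h1 : |(p - q) * v.1 1| ≤ 2 * |v.1 1| := by
      have : (p - q) * v.1 1 = (v.1 0 - q * v.1 1) - (v.1 0 - p * v.1 1) := by ring
      rw [this]
      have := abs_sub (v.1 0 - q * v.1 1) (v.1 0 - p * v.1 1)
      linarith
    rw [abs_mul] at h1
    have : 0 < |v.1 1| := abs_pos.2 hy
    nlinarith

lemma exists_faithful (r : ℕ) (hr : 2 ≤ r) :
    ∃ ρ : FreeGroup (Fin r) →* (Matrix (Fin 2) (Fin 2) ℤ)ˣ, Function.Injective ρ := by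
  haveI : Nontrivial (Fin r) := Fin.nontrivial_iff_two_le.2 hr
  refine ⟨_, FreeGroup.injective_lift_of_ping_pong
    (fun i : Fin r => gen (6 * (i : ℕ)) (6 * (i : ℕ) + 3))
    (fun i => dom (6 * (i : ℕ)))
    (fun i => dom (6 * (i : ℕ) + 3)) ?_ ?_ ?_ ?_ ?_ ?_⟩
  · intro i
    refine ⟨⟨![6 * (i : ℕ), 1], fun h => by simpa using congrFun h 1⟩, ?_⟩
    simp [dom]
  · intro i j hij
    apply dom_disj
    have : (i : ℕ) ≠ j := fun h => hij (Fin.ext h)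
    rw [le_abs]; omega
  · intro i j hij
    apply dom_disj
    have : (i : ℕ) ≠ j := fun h => hij (Fin.ext h)
    rw [le_abs]; omega
  · intro i j
    apply dom_disj
    rw [le_abs]; omega
  · rintro i _ ⟨v, hv, rfl⟩
    simp only [dom, Set.mem_compl_iff, Set.mem_ofPred_eq, not_le] at hv ⊢
    simp only [smul_val, gen, Matrix.mulVec, dotProduct, Fin.sum_univ_two]
    simp
    generalize (6 * (i : ℤ)) = p at *
    generalize v.1 0 = x at *
    generalize v.1 1 = y at *
    rw [show p * x + (-1 - p * (p + 3)) * y - p * (x + (-3 + -p) * y) = -y by ring, abs_neg,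
      show x + (-3 + -p) * y = x - (p + 3) * y by ring]
    exact hv.le
  · rintro i _ ⟨v, hv, rfl⟩
    simp only [dom, Set.mem_compl_iff, Set.mem_ofPred_eq, not_le] at hv ⊢
    have : ∀ p q : ℤ, ((gen p q)⁻¹).val = !![-q, 1 + p * q; -1, p] := fun _ _ => rfl
    simp only [Pi.inv_apply, smul_val, this, Matrix.mulVec, dotProduct, Fin.sum_univ_two]
    simp
    generalize (6 * (i : ℤ)) = p at *
    generalize v.1 0 = x at *
    generalize v.1 1 = y at *
    rw [show (-3 + -p) * x + (1 + p * (p + 3)) * y - (p + 3) * (-x + p * y) = y by ring,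
      show -x + p * y = -(x - p * y) by ring, abs_neg]
    exact hv.le


/-- monomial matrices -/
def mono {V R : Type*} [Fintype V] [DecidableEq V] [Ring R] (σ : Equiv.Perm V) (c : V → Rˣ) :
    (Matrix V V R)ˣ where
  val := Matrix.of fun w' w => if w' = σ w then (c w : R) else 0
  inv := Matrix.of fun w' w => if w = σ w' then (((c w')⁻¹ : Rˣ) : R) else 0
  val_inv := by
    ext a b
    rw [Matrix.mul_apply, Finset.sum_eq_single (σ.symm a)]
    · by_cases h : a = b
      · subst h; simp
      · simp [h, Ne.symm h]
    · intro u _ hu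
      have : a ≠ σ u := fun h => hu (by simp [h])
      simp [this]
    · simp
  inv_val := by
    ext a b
    rw [Matrix.mul_apply, Finset.sum_eq_single (σ a)]
    · by_cases h : a = b
      · subst h; simp
      · simp [h]
    · intro u _ hu
      simp [hu]
    · simp

lemma mono_col {V R : Type*} [Fintype V] [DecidableEq V] [Ring R] (σ : Equiv.Perm V) (c : V → Rˣ)
    (A : Matrix V V R) (v0 w : V) (g : R) (h : ∀ w', A w' v0 = if w' = w then g else 0) (w' : V) :
    ((mono σ c).val * A) w' v0 = if w' = σ w then c w * g else 0 := by
  rw [Matrix.mul_apply, Finset.sum_eq_single w]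
  · simp [h, mono]
  · intro u _ hu; simp [h, hu]
  · simp

lemma mono_inv_col {V R : Type*} [Fintype V] [DecidableEq V] [Ring R] (σ : Equiv.Perm V)
    (c : V → Rˣ)
    (A : Matrix V V R) (v0 w : V) (g : R) (h : ∀ w', A w' v0 = if w' = w then g else 0) (w' : V) :
    (((mono σ c)⁻¹).val * A) w' v0 =
      if w' = σ.symm w then (((c (σ.symm w))⁻¹ : Rˣ) : R) * g else 0 := by
  have e : ((mono σ c)⁻¹).val =
    Matrix.of fun w' w => if w = σ w' then (((c w')⁻¹ : Rˣ) : R) else 0 := rfl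
  rw [Matrix.mul_apply, Finset.sum_eq_single w, e]
  · by_cases hw : w' = σ.symm w
    · subst hw; simp [h]
    · have : ¬ w = σ w' := fun h => hw (by simp [h])
      simp [hw, this]
  · intro u _ hu; simp [h, hu]
  · simp

lemma exists_reps {ι R : Type} [Ring R] [Nontrivial R] (Δ : Subgroup (FreeGroup ι)) (hΔ : Δ.FG)
    (ρ : FreeGroup ι →* Rˣ) (hρ : Function.Injective ρ) :
    ∃ (V : Type) (_ : Fintype V) (_ : DecidableEq V) (v0 : V)
      (Ψ : FreeGroup ι →* (Matrix V V R)ˣ),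
      ∀ γ, γ ∈ Δ ↔ (Ψ γ).val v0 v0 = (ρ γ).val := by
  classical
  obtain ⟨S, hS⟩ := hΔ
  let VF : Finset (FreeGroup ι ⧸ Δ) := insert ((1 : FreeGroup ι) : FreeGroup ι ⧸ Δ)
    (S.biUnion fun s => (s.toWord.tails.toFinset).image
      fun l => ((FreeGroup.mk l : FreeGroup ι) : FreeGroup ι ⧸ Δ))
  let V := {x // x ∈ VF}
  have h1VF : ((1 : FreeGroup ι) : FreeGroup ι ⧸ Δ) ∈ VF := Finset.mem_insert_self _ _
  let v0 : V := ⟨_, h1VF⟩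
  obtain ⟨t, ht1, ht⟩ : ∃ t : FreeGroup ι ⧸ Δ → FreeGroup ι,
      t ((1 : FreeGroup ι) : FreeGroup ι ⧸ Δ) = 1 ∧ ∀ q, (t q : FreeGroup ι ⧸ Δ) = q := by
    refine ⟨fun q => if q = ((1 : FreeGroup ι) : FreeGroup ι ⧸ Δ) then 1 else q.out, by simp, ?_⟩
    intro q
    by_cases h : q = ((1 : FreeGroup ι) : FreeGroup ι ⧸ Δ)
    · simp [h]
    · simp only [h, if_false]; exact QuotientGroup.out_eq' q
  have hσ : ∀ i : ι, ∃ σ : Equiv.Perm V, ∀ v : V, (FreeGroup.of i) • v.1 ∈ VF →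
      (σ v).1 = (FreeGroup.of i) • v.1 := by
    intro i
    obtain ⟨g, hg⟩ := Set.MapsTo.exists_equiv_extend_of_card_eq (α := V) (t := VF)
      (s := {v : V | (FreeGroup.of i) • v.1 ∈ VF}) (f := fun v => (FreeGroup.of i) • v.1)
      (by simp [V]) (fun v hv => hv) (fun v _ w _ h => Subtype.ext (smul_left_cancel _ h))
    exact ⟨g, hg⟩
  choose σ hσ using hσ
  let c : ι → V → FreeGroup ι := fun i v =>
    if (σ i v).1 = FreeGroup.of i • v.1 then (t (σ i v).1)⁻¹ * (FreeGroup.of i * t v.1) else 1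
  have hc : ∀ i v, c i v ∈ Δ := by
    intro i v
    simp only [c]
    split_ifs with h
    · rw [← QuotientGroup.eq, ht, h]
      conv_lhs => rw [← ht v.1]
      rfl
    · exact Δ.one_mem
  let Ψ : FreeGroup ι →* (Matrix V V R)ˣ :=
    FreeGroup.lift fun i => mono (σ i) (fun v => ρ (c i v))
  let Col : FreeGroup ι → V → FreeGroup ι → Prop := fun γ w g =>
    ∀ w', (Ψ γ).val w' v0 = if w' = w then (ρ g : R) else 0
  have L0 : Col 1 v0 1 := by
    intro w'; simp [Matrix.one_apply]
  have L1 : ∀ i γ w g, Col γ w g → Col (FreeGroup.of i * γ) (σ i w) (c i w * g) := by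
    intro i γ w g h w'
    have := mono_col (σ i) (fun v => ρ (c i v)) _ v0 w _ h w'
    simpa [Ψ] using this
  have L2 : ∀ i γ w g, Col γ w g →
      Col ((FreeGroup.of i)⁻¹ * γ) ((σ i).symm w) ((c i ((σ i).symm w))⁻¹ * g) := by
    intro i γ w g h w'
    have := mono_inv_col (σ i) (fun v => ρ (c i v)) _ v0 w _ h w'
    simpa [Ψ] using this
  have hcons : ∀ (i : ι) (b : Bool) l, (FreeGroup.mk ((i, b) :: l) : FreeGroup ι) =
      (if b then FreeGroup.of i else (FreeGroup.of i)⁻¹) * FreeGroup.mk l := by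
    intro i b l
    cases b
    · simp [FreeGroup.of, FreeGroup.inv_mk, FreeGroup.mul_mk, FreeGroup.invRev]
    · simp [FreeGroup.of, FreeGroup.mul_mk]
  have P : ∀ l : List (ι × Bool), ∃ w, ∃ g ∈ Δ, Col (FreeGroup.mk l) w g := by
    intro l
    induction l with
    | nil => exact ⟨v0, 1, Δ.one_mem, L0⟩
    | cons x l ih =>
      obtain ⟨i, b⟩ := x
      obtain ⟨w, g, hg, h⟩ := ih
      rw [hcons]
      cases b
      · exact ⟨_, _, Δ.mul_mem (Δ.inv_mem (hc _ _)) hg, L2 i _ _ _ h⟩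
      · exact ⟨_, _, Δ.mul_mem (hc _ _) hg, L1 i _ _ _ h⟩
  have L3 : ∀ l : List (ι × Bool),
      (∀ l', l' <:+ l → ((FreeGroup.mk l' : FreeGroup ι) : FreeGroup ι ⧸ Δ) ∈ VF) →
      ∃ w : V, w.1 = ((FreeGroup.mk l : FreeGroup ι) : FreeGroup ι ⧸ Δ) ∧
        Col (FreeGroup.mk l) w ((t w.1)⁻¹ * FreeGroup.mk l) := by
    intro l
    induction l with
    | nil =>
      intro _
      refine ⟨v0, rfl, ?_⟩
      have : (t v0.1)⁻¹ * FreeGroup.mk [] = 1 := by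
        rw [show v0.1 = ((1 : FreeGroup ι) : FreeGroup ι ⧸ Δ) from rfl, ht1]
        rfl
      rw [this]
      exact L0
    | cons x l ih =>
      intro H
      obtain ⟨i, b⟩ := x
      obtain ⟨w, hw, h⟩ := ih fun l' hl' => H l' (hl'.trans (List.suffix_cons _ _))
      have hm := H _ List.suffix_rfl
      rw [hcons] at hm ⊢
      cases b
      · simp only [Bool.false_eq_true, if_false] at hm ⊢
        have e0 : FreeGroup.of i • (((FreeGroup.of i)⁻¹ * FreeGroup.mk l : FreeGroup ι) :
            FreeGroup ι ⧸ Δ) = w.1 := by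
          rw [hw]
          change ((FreeGroup.of i * ((FreeGroup.of i)⁻¹ * FreeGroup.mk l) : FreeGroup ι) :
            FreeGroup ι ⧸ Δ) = _
          rw [mul_inv_cancel_left]
        have e1 : σ i ⟨_, hm⟩ = w := by
          apply Subtype.ext
          rw [hσ i ⟨_, hm⟩ (by rw [e0]; exact w.2), e0]
        have e2 : (σ i).symm w = ⟨_, hm⟩ := by rw [← e1]; simp
        refine ⟨⟨_, hm⟩, rfl, ?_⟩
        have := L2 i _ _ _ h
        rw [e2] at this
        convert this using 1
        simp only [c, e1, e0, if_true]
        group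
      · simp only [if_true] at hm ⊢
        have e0 : FreeGroup.of i • w.1 = ((FreeGroup.of i * FreeGroup.mk l : FreeGroup ι) :
            FreeGroup ι ⧸ Δ) := by
          rw [hw]; rfl
        have e1 := hσ i w (by rw [e0]; exact hm)
        refine ⟨_, e1.trans e0, ?_⟩
        have := L1 i _ _ _ h
        convert this using 1
        simp only [c, e1, if_true]
        group
  let K : Subgroup (FreeGroup ι) :=
      { carrier := {δ | Col δ v0 δ}
        one_mem' := L0
        mul_mem' := by
          intro a b ha hb w'
          rw [map_mul, Units.val_mul, Matrix.mul_apply, Finset.sum_eq_single v0]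
          · rw [ha w', hb v0]; by_cases h : w' = v0 <;> simp [h]
          · intro u _ hu; rw [hb u]; simp [hu]
          · simp
        inv_mem' := by
          intro a ha w'
          have h1 : ((Ψ a⁻¹).val * (Ψ a).val) w' v0 = (1 : Matrix V V R) w' v0 := by
            rw [← Units.val_mul, ← map_mul]; simp
          rw [Matrix.mul_apply, Finset.sum_eq_single v0, ha v0] at h1
          · simp only [if_true] at h1
            rw [← Units.eq_mul_inv_iff_mul_eq] at h1
            rw [h1, Matrix.one_apply]
            by_cases h : w' = v0 <;> simp [h]
          · intro u _ hu; rw [ha u]; simp [hu]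
          · simp }
  have hsub : Δ ≤ K := by
    refine hS.symm.le.trans ?_
    rw [Subgroup.closure_le]
    intro s hs
    have hsΔ : s ∈ Δ := hS ▸ Subgroup.subset_closure hs
    obtain ⟨w, hw, h⟩ := L3 s.toWord (by
      intro l' hl'
      refine Finset.mem_insert_of_mem (Finset.mem_biUnion.2 ⟨s, hs, ?_⟩)
      exact Finset.mem_image.2 ⟨l', by simpa using hl', rfl⟩)
    rw [FreeGroup.mk_toWord] at hw h
    have hw0 : w = v0 := by
      apply Subtype.ext
      rw [hw]
      exact ((QuotientGroup.eq).2 (by simpa using hsΔ)).symm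
    subst hw0
    change Col s v0 s
    have : (t v0.1)⁻¹ * s = s := by
      rw [show v0.1 = ((1 : FreeGroup ι) : FreeGroup ι ⧸ Δ) from rfl, ht1]; simp
    rwa [this] at h
  refine ⟨V, inferInstance, inferInstance, v0, Ψ, fun γ => ⟨fun h => ?_, fun h => ?_⟩⟩
  · simpa using (hsub h) v0
  · obtain ⟨w, g, hg, hcol⟩ := P γ.toWord
    rw [FreeGroup.mk_toWord] at hcol
    have := hcol v0
    rw [h] at this
    split_ifs at this
    · rw [hρ (Units.ext this)]; exact hg
    · exact absurd this (Units.ne_zero _)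

lemma growth {G S : Type*} [Group G] [NormedRing S] (f : G →* S) (X : Set G) (hX : X.Finite) :
    ∃ B : ℕ, ∀ l : List G, (∀ x ∈ l, x ∈ X) → ‖f l.prod‖ ≤ (B : ℝ) ^ (l.length + 1) := by
  obtain ⟨b, hb⟩ := (hX.image fun x => ‖f x‖).bddAbove
  obtain ⟨B, hB⟩ := exists_nat_ge (max b ‖(1 : S)‖)
  refine ⟨B, fun l => ?_⟩
  induction l with
  | nil => intro _; simpa using (le_max_right _ _).trans hB
  | cons x l ih =>
    intro h
    have h1 := ih fun y hy => h y (List.mem_cons_of_mem _ hy)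
    have h2 : ‖f x‖ ≤ B := (hb ⟨x, h x List.mem_cons_self, rfl⟩).trans ((le_max_left _ _).trans hB)
    rw [List.prod_cons, map_mul, List.length_cons, pow_succ']
    exact (norm_mul_le _ _).trans (mul_le_mul h2 h1 (norm_nonneg _) (by positivity))

attribute [local instance] Matrix.linftyOpNormedRing

lemma entry_le {V S : Type*} [Fintype V] [DecidableEq V] [NormedRing S] (A : Matrix V V S)
    (v w : V) : ‖A v w‖ ≤ ‖A‖ := by
  have : ‖A v w‖₊ ≤ ‖A‖₊ := by
    rw [Matrix.linfty_opNNNorm_def]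
    exact (Finset.single_le_sum (f := fun j => ‖A v j‖₊) (fun _ _ => zero_le)
      (Finset.mem_univ w)).trans
        (Finset.le_sup (f := fun i => ∑ j, ‖A i j‖₊) (Finset.mem_univ v))
  exact_mod_cast this

lemma growth_entry {G V : Type*} [Group G] [Fintype V] [DecidableEq V] (v0 : V)
    (Ψ : G →* (Matrix V V (Matrix (Fin 2) (Fin 2) ℤ))ˣ)
    (ρ : G →* (Matrix (Fin 2) (Fin 2) ℤ)ˣ) (X : Set G) (hX : X.Finite) :
    ∃ B : ℕ, 1 ≤ B ∧ ∀ l : List G, (∀ x ∈ l, x ∈ X) → 1 ≤ l.length → ∀ i j,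
      ((Ψ l.prod).val v0 v0 i j - (ρ l.prod).val i j).natAbs < 2 ^ (B * l.length) := by
  obtain ⟨B1, h1⟩ := growth ((Units.coeHom _).comp Ψ) X hX
  obtain ⟨B2, h2⟩ := growth ((Units.coeHom _).comp ρ) X hX
  refine ⟨2 * (B1 + B2 + 1), by omega, fun l hl hlen i j => ?_⟩
  have e1 := (entry_le _ i j).trans ((entry_le _ v0 v0).trans (h1 l hl))
  have e2 := (entry_le _ i j).trans (h2 l hl)
  simp only [MonoidHom.comp_apply, Units.coeHom_apply] at e1 e2
  set a := (Ψ l.prod).val v0 v0 i j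
  set b := (ρ l.prod).val i j
  rw [Int.norm_eq_abs] at e1 e2
  have e1' : a.natAbs ≤ B1 ^ (l.length + 1) := by
    have : ((a.natAbs : ℕ) : ℝ) ≤ ((B1 ^ (l.length + 1) : ℕ) : ℝ) := by
      rw [Nat.cast_natAbs]; push_cast; exact e1
    exact_mod_cast this
  have e2' : b.natAbs ≤ B2 ^ (l.length + 1) := by
    have : ((b.natAbs : ℕ) : ℝ) ≤ ((B2 ^ (l.length + 1) : ℕ) : ℝ) := by
      rw [Nat.cast_natAbs]; push_cast; exact e2
    exact_mod_cast this
  calc (a - b).natAbs ≤ a.natAbs + b.natAbs := Int.natAbs_sub_le a b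
    _ ≤ B1 ^ (l.length + 1) + B2 ^ (l.length + 1) := by omega
    _ ≤ (B1 + B2) ^ (l.length + 1) := pow_add_pow_le (by omega) (by omega) (by omega)
    _ < (2 ^ (B1 + B2 + 1)) ^ (l.length + 1) := by
        apply Nat.pow_lt_pow_left _ (by omega)
        exact lt_trans (Nat.lt_succ_self _) Nat.lt_two_pow_self
    _ ≤ (2 ^ (B1 + B2 + 1)) ^ (2 * l.length) := Nat.pow_le_pow_right (by positivity) (by omega)
    _ = 2 ^ (2 * (B1 + B2 + 1) * l.length) := by rw [← pow_mul]; congr 1; ring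

lemma wordNorm_spec (r : ℕ) (γ : FreeGroup (Fin r)) :
    ∃ l : List (FreeGroup (Fin r)),
      l.length = wordNorm (Set.range (FreeGroup.of : Fin r → FreeGroup (Fin r))) γ ∧
      (∀ x ∈ l, x ∈ Set.range (FreeGroup.of : Fin r → FreeGroup (Fin r)) ∪
        (Set.range (FreeGroup.of : Fin r → FreeGroup (Fin r)))⁻¹) ∧ l.prod = γ := by
  have hne : {m | ∃ l : List (FreeGroup (Fin r)), l.length = m ∧
      (∀ x ∈ l, x ∈ Set.range (FreeGroup.of : Fin r → FreeGroup (Fin r)) ∪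
        (Set.range (FreeGroup.of : Fin r → FreeGroup (Fin r)))⁻¹) ∧ l.prod = γ}.Nonempty := by
    have : γ ∈ Subgroup.closure (Set.range (FreeGroup.of : Fin r → FreeGroup (Fin r))) := by
      rw [FreeGroup.closure_range_of]; trivial
    rw [← Subgroup.mem_toSubmonoid, Subgroup.closure_toSubmonoid] at this
    obtain ⟨l, hl, hp⟩ := Submonoid.exists_list_of_mem_closure this
    exact ⟨l.length, l, rfl, hl, hp⟩
  exact Nat.sInf_mem hne

end FES

/-- Corollary 1.2 (free case): finitely generated subgroups of a free group of rank
`r ≥ 2` can be separated by finite quotients of size polynomial in the word length, with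
the same bound for the index of the separating subgroup and of its normal core. -/
theorem free_effective_separability (r : ℕ) (hr : 2 ≤ r)
    (Δ₀ : Subgroup (FreeGroup (Fin r))) (hΔ₀ : Δ₀.FG) :
    ∃ C D : ℝ, 0 < C ∧ 0 < D ∧
      ∀ γ : FreeGroup (Fin r), γ ∉ Δ₀ →
        ∃ (Q : Type) (_ : Group Q) (_ : Fintype Q) (φ : FreeGroup (Fin r) →* Q),
          φ γ ∉ Δ₀.map φ ∧
          (Fintype.card Q : ℝ) ≤
            C * (wordNorm (Set.range (FreeGroup.of : Fin r → FreeGroup (Fin r))) γ : ℝ) ^ D ∧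
          Δ₀ ≤ Δ₀ ⊔ φ.ker ∧
          γ ∉ Δ₀ ⊔ φ.ker ∧
          (Δ₀ ⊔ φ.ker).index ≤ Fintype.card Q ∧
          (Δ₀ ⊔ φ.ker).normalCore.index ≤ Fintype.card Q := by
  obtain ⟨ρ, hρ⟩ := FES.exists_faithful r hr
  obtain ⟨V, _, _, v0, Ψ, hΨ⟩ := FES.exists_reps Δ₀ hΔ₀ ρ hρ
  obtain ⟨B, hB1, hB⟩ := FES.growth_entry v0 Ψ ρ
    (Set.range (FreeGroup.of : Fin r → FreeGroup (Fin r)) ∪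
        (Set.range (FreeGroup.of : Fin r → FreeGroup (Fin r)))⁻¹)
    ((Set.finite_range _).union (Set.finite_range _).inv)
  set d : ℕ := 4 * (Fintype.card V * Fintype.card V) + 4 with hd
  refine ⟨((2 * B : ℕ) : ℝ) ^ d, (d : ℝ), by positivity, by positivity, fun γ hγ => ?_⟩
  obtain ⟨l, hlen, hl, rfl⟩ := FES.wordNorm_spec r γ
  rw [← hlen]
  have hl1 : 1 ≤ l.length := by
    rcases l with _ | ⟨x, l⟩
    · exact absurd Δ₀.one_mem (by simpa using hγ)
    · simp
  have hne : (Ψ l.prod).val v0 v0 ≠ (ρ l.prod).val := fun h => hγ ((hΨ _).2 h)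
  obtain ⟨i, j, hij⟩ : ∃ i j, (Ψ l.prod).val v0 v0 i j ≠ (ρ l.prod).val i j := by
    by_contra! hcon
    exact hne (Matrix.ext hcon)
  obtain ⟨m, hm1, hm2, hm3⟩ := FES.exists_not_dvd (B * l.length) _
    (Int.natAbs_ne_zero.2 (sub_ne_zero.2 hij)) (hB l hl hl1 i j)
  haveI : NeZero m := ⟨by omega⟩
  let π : Matrix (Fin 2) (Fin 2) ℤ →+* Matrix (Fin 2) (Fin 2) (ZMod m) :=
    (Int.castRingHom (ZMod m)).mapMatrix
  let φ1 : FreeGroup (Fin r) →* (Matrix V V (Matrix (Fin 2) (Fin 2) (ZMod m)))ˣ :=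
    (Units.map (π.mapMatrix (m := V) : _ →* _)).comp Ψ
  let φ2 : FreeGroup (Fin r) →* (Matrix (Fin 2) (Fin 2) (ZMod m))ˣ :=
    (Units.map (π : _ →* _)).comp ρ
  let φ := φ1.prod φ2
  have hsep : φ l.prod ∉ Δ₀.map φ := by
    rintro ⟨δ, hδ, he⟩
    have h1 : φ1 δ = φ1 l.prod := congrArg Prod.fst he
    have h2 : φ2 δ = φ2 l.prod := congrArg Prod.snd he
    have h1' : (((Ψ δ).val v0 v0 i j : ℤ) : ZMod m) = (((Ψ l.prod).val v0 v0 i j : ℤ) : ZMod m) :=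
      congrArg (fun u => u.val v0 v0 i j) h1
    have h2' : (((ρ δ).val i j : ℤ) : ZMod m) = (((ρ l.prod).val i j : ℤ) : ZMod m) :=
      congrArg (fun u => u.val i j) h2
    rw [(hΨ δ).1 hδ, h2'] at h1'
    apply hm3
    rw [← Int.natCast_dvd, ← ZMod.intCast_zmod_eq_zero_iff_dvd, Int.cast_sub, h1', sub_self]
  have hker : φ.ker.index ≤ Nat.card
      ((Matrix V V (Matrix (Fin 2) (Fin 2) (ZMod m)))ˣ × (Matrix (Fin 2) (Fin 2) (ZMod m))ˣ) := by
    rw [Subgroup.index_ker]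
    exact Subgroup.card_le_card_group _
  have hk0 : φ.ker.index ≠ 0 := by
    rw [Subgroup.index_ker]; exact Nat.card_pos.ne'
  refine ⟨_, inferInstance, inferInstance, φ, hsep, ?_, le_sup_left, ?_, ?_, ?_⟩
  · rw [← Nat.card_eq_fintype_card, Nat.card_prod]
    have c1 : Nat.card (Matrix V V (Matrix (Fin 2) (Fin 2) (ZMod m)))ˣ ≤
        m ^ (4 * (Fintype.card V * Fintype.card V)) := by
      refine (Nat.card_le_card_of_injective _ Units.val_injective).trans ?_
      simp [Matrix, Nat.card_pi, ← pow_mul]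
      apply le_of_eq; congr 1; ring
    have c2 : Nat.card (Matrix (Fin 2) (Fin 2) (ZMod m))ˣ ≤ m ^ 4 := by
      refine (Nat.card_le_card_of_injective _ Units.val_injective).trans ?_
      simp [Matrix, Nat.card_pi, ← pow_mul]
    rw [Real.rpow_natCast, ← mul_pow]
    have := (Nat.mul_le_mul c1 c2).trans ((pow_add m _ _).symm.le.trans
      (Nat.pow_le_pow_left hm2 d))
    calc _ ≤ (((2 * (B * l.length)) ^ d : ℕ) : ℝ) := by exact_mod_cast this
      _ = _ := by push_cast; ring
  · intro h
    apply hsep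
    have : l.prod ∈ (Δ₀.map φ).comap φ := by rwa [Subgroup.comap_map_eq]
    exact this
  · rw [← Nat.card_eq_fintype_card]
    exact (Nat.le_of_dvd (Nat.pos_of_ne_zero hk0) (Subgroup.index_dvd_of_le le_sup_right)).trans hker
  · rw [← Nat.card_eq_fintype_card]
    exact (Nat.le_of_dvd (Nat.pos_of_ne_zero hk0) (Subgroup.index_dvd_of_le
      ((Subgroup.normal_le_normalCore).2 le_sup_right))).trans hker
end

section
/- Let Γ be a finitely generated group, Δ₀ a subgroup of Γ, n ≥ 1, and ρ₀ : Γ → GL(n, ℂ) a homomorphism. Suppose that for every finite subset S of Γ \ Δ₀ there exist homomorphisms ρ, ρ' : Γ → GL(n,ℂ) such that ρ(δ) = ρ₀(δ) = ρ'(δ) for every δ ∈ Δ₀ and ρ(γ) ≠ ρ'(γ) for every γ ∈ S. Then there exist homomorphisms ρ, ρ' : Γ → GL(n,ℂ) with ρ(δ) = ρ₀(δ) = ρ'(δ) for every δ ∈ Δ₀ and ρ(γ) ≠ ρ'(γ) for every γ ∈ Γ with γ ∉ Δ₀. -/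
open Cardinal in
theorem aux_embed {k F C : Type*} [Field k] [Field F] [Field C] [Algebra k F] [Algebra k C]
    [IsAlgClosed C] [Countable k] [Countable F] (hC : ℵ₀ < #C) : Nonempty (F →ₐ[k] C) := by
  obtain ⟨s, hs⟩ := exists_isTranscendenceBasis k F
  obtain ⟨t, ht⟩ := exists_isTranscendenceBasis k C
  have h1 := IsAlgClosed.cardinal_eq_cardinal_transcendence_basis_of_aleph0_lt _ ht
    (mk_le_aleph0_iff.2 inferInstance) hC
  have h2 : #t = #C := by simpa using h1.symm
  have h3 : Infinite t := by
    rw [infinite_iff, h2]; exact hC.le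
  have h4 : Countable s := inferInstance
  obtain ⟨f, hf⟩ := exists_injective_nat s
  let e : s → t := fun x => Infinite.natEmbedding t (f x)
  have he : Function.Injective e := (Infinite.natEmbedding t).injective.comp hf
  have hi : AlgebraicIndependent k (fun x => ((e x : t) : C)) := ht.1.comp e he
  let R := Algebra.adjoin k (Set.range ((↑) : s → F))
  have hRF : Algebra.IsAlgebraic R F := hs.isAlgebraic
  let g : R →ₐ[k] C := (MvPolynomial.aeval (fun x => ((e x : t) : C))).comp
    (hs.1.aevalEquiv.symm : R →ₐ[k] MvPolynomial s k)
  have hg : Function.Injective g := Function.Injective.comp (g := MvPolynomial.aeval (R := k) (fun x => ((e x : t) : C))) hi hs.1.aevalEquiv.symm.injective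
  letI : Algebra R C := g.toRingHom.toAlgebra
  have : FaithfulSMul R C := (faithfulSMul_iff_algebraMap_injective R C).2 hg
  have : IsScalarTower k R C := IsScalarTower.of_algebraMap_eq (fun x => (g.commutes x).symm)
  exact ⟨(IsAlgClosed.lift (R := R) (S := F) (M := C)).restrictScalars k⟩

/-- transfer a matrix representation through a partially defined field embedding -/
theorem aux_rep {Γ L C : Type*} [Group Γ] [Field L] [Field C] {n : ℕ} (F : Subfield L)
    (φ : F →+* C) (σ : Γ →* Matrix (Fin n) (Fin n) L) (hσ : ∀ γ i j, σ γ i j ∈ F) :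
    ∃ ρ : Γ →* GL (Fin n) C, ∀ γ i j, (ρ γ : Matrix (Fin n) (Fin n) C) i j = φ ⟨σ γ i j, hσ γ i j⟩ := by
  let τ : Γ →* Matrix (Fin n) (Fin n) F :=
    { toFun := fun γ => Matrix.of fun i j => ⟨σ γ i j, hσ γ i j⟩
      map_one' := by
        ext i j
        simp [Matrix.one_apply, apply_ite]
      map_mul' := fun a b => by
        ext i j
        simp [Matrix.mul_apply] }
  exact ⟨MonoidHom.toHomUnits ((φ.mapMatrix (m := Fin n)).toMonoidHom.comp τ), fun γ i j => rfl⟩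

/-- the product of a family of matrix representations in the ultraproduct -/
theorem aux_prod {Γ I : Type*} [Group Γ] {n : ℕ} (u : Ultrafilter I)
    (r : I → Γ →* GL (Fin n) ℂ) :
    ∃ σ : Γ →* Matrix (Fin n) (Fin n) (Filter.Germ (u : Filter I) ℂ),
      ∀ γ i j, σ γ i j = Filter.Germ.ofFun (fun x => (r x γ : Matrix (Fin n) (Fin n) ℂ) i j) := by
  let τ : Γ →* Matrix (Fin n) (Fin n) (I → ℂ) :=
    { toFun := fun γ => Matrix.of fun i j x => (r x γ : Matrix (Fin n) (Fin n) ℂ) i j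
      map_one' := by
        ext i j x
        simp [Matrix.one_apply]
        split_ifs <;> rfl
      map_mul' := fun a b => by
        ext i j x
        simp [Matrix.mul_apply] }
  exact ⟨((Filter.Germ.coeRingHom (R := ℂ) (u : Filter I)).mapMatrix (m := Fin n)).toMonoidHom.comp τ, fun γ i j => rfl⟩

/-- Lemma 3.2: if `ρ₀` distinguishes `Δ₀` in `Γ` (for every finite subset `S` of
`Γ \ Δ₀` there are two representations agreeing with `ρ₀` on `Δ₀` that differ on all of
`S`), then `ρ₀` strongly distinguishes `Δ₀` in `Γ`. -/
theorem distinguished_to_strongly_distinguished {Γ : Type*} [Group Γ]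
    (hΓ : Group.FG Γ) (Δ₀ : Subgroup Γ) (n : ℕ) (hn : 1 ≤ n)
    (ρ₀ : Γ →* GL (Fin n) ℂ)
    (h : ∀ S : Finset Γ, (∀ γ ∈ S, γ ∉ Δ₀) →
      ∃ ρ ρ' : Γ →* GL (Fin n) ℂ,
        (∀ δ ∈ Δ₀, ρ δ = ρ₀ δ ∧ ρ' δ = ρ₀ δ) ∧ ∀ γ ∈ S, ρ γ ≠ ρ' γ) :
    ∃ ρ ρ' : Γ →* GL (Fin n) ℂ,
      (∀ δ ∈ Δ₀, ρ δ = ρ₀ δ ∧ ρ' δ = ρ₀ δ) ∧ ∀ γ : Γ, γ ∉ Δ₀ → ρ γ ≠ ρ' γ := by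
  classical
  have hcΓ : Countable Γ := by
    obtain ⟨α, _, f, hf⟩ := Group.fg_iff_exists_freeGroup_hom_surjective_finite.1 hΓ
    exact hf.countable
  let u : Ultrafilter (Finset Γ) := Ultrafilter.of Filter.atTop
  have hu : (u : Filter (Finset Γ)) ≤ Filter.atTop := Ultrafilter.of_le _
  have h' : ∀ S : Finset Γ, ∃ ρ ρ' : Γ →* GL (Fin n) ℂ,
        (∀ δ ∈ Δ₀, ρ δ = ρ₀ δ ∧ ρ' δ = ρ₀ δ) ∧ ∀ γ ∈ S, γ ∉ Δ₀ → ρ γ ≠ ρ' γ := by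
    intro S
    obtain ⟨ρ, ρ', h1, h2⟩ := h (S.filter (· ∉ Δ₀)) (by simp)
    exact ⟨ρ, ρ', h1, fun γ hγ hγ' => h2 γ (by simp [hγ, hγ'])⟩
  choose r r' hr hrr using h'
  obtain ⟨σ, hσ⟩ := aux_prod u r
  obtain ⟨σ', hσ'⟩ := aux_prod u r'
  let L := Filter.Germ (u : Filter (Finset Γ)) ℂ
  let T : Set L := Set.range (fun p : Γ × Fin n × Fin n => σ p.1 p.2.1 p.2.2) ∪
    Set.range (fun p : Γ × Fin n × Fin n => σ' p.1 p.2.1 p.2.2)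
  have hT : T.Countable := (Set.countable_range _).union (Set.countable_range _)
  let F : Subfield L := Subfield.closure T
  have hF : Countable F := by
    rw [← Cardinal.mk_le_aleph0_iff]
    exact (Subfield.cardinalMk_closure_le_max T).trans
      (max_le (Cardinal.mk_le_aleph0_iff.2 hT.to_subtype) le_rfl)
  have hσF : ∀ γ i j, σ γ i j ∈ F := fun γ i j =>
    Subfield.subset_closure (Or.inl ⟨(γ, i, j), rfl⟩)
  have hσF' : ∀ γ i j, σ' γ i j ∈ F := fun γ i j =>
    Subfield.subset_closure (Or.inr ⟨(γ, i, j), rfl⟩)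
  let c : ℂ →+* L := (Filter.Germ.coeRingHom (u : Filter (Finset Γ))).comp
    (Pi.constRingHom (Finset Γ) ℂ)
  let k : Subfield ℂ := F.comap c
  let ck : k →+* F := (c.comp k.subtype).codRestrict F (fun x => x.2)
  have hk : Countable k := ck.injective.countable
  letI : Algebra k F := ck.toAlgebra
  obtain ⟨φ⟩ := aux_embed (k := k) (F := F) (C := ℂ) (by
    rw [Cardinal.mk_complex]; exact Cardinal.aleph0_lt_continuum)
  have hφ : ∀ (z : ℂ) (w : L) (hw : w ∈ F), w = c z → φ ⟨w, hw⟩ = z := by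
    rintro z w hw rfl
    exact φ.commutes (⟨z, hw⟩ : k)
  obtain ⟨ρ, hρ⟩ := aux_rep F φ.toRingHom σ hσF
  obtain ⟨ρ', hρ'⟩ := aux_rep F φ.toRingHom σ' hσF'
  refine ⟨ρ, ρ', fun δ hδ => ⟨?_, ?_⟩, fun γ hγ heq => ?_⟩
  · ext i j
    rw [hρ]
    apply hφ
    rw [hσ]
    simp only [fun S => (hr S δ hδ).1]
    rfl
  · ext i j
    rw [hρ']
    apply hφ
    rw [hσ']
    simp only [fun S => (hr S δ hδ).2]
    rfl
  · have hev : ∀ i j, ∀ᶠ S in (u : Filter (Finset Γ)),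
        (r S γ : Matrix (Fin n) (Fin n) ℂ) i j = (r' S γ : Matrix (Fin n) (Fin n) ℂ) i j := by
      intro i j
      have h1 : (ρ γ : Matrix (Fin n) (Fin n) ℂ) i j = (ρ' γ : Matrix (Fin n) (Fin n) ℂ) i j := by
        rw [heq]
      rw [hρ, hρ'] at h1
      have h2 := congrArg Subtype.val (φ.toRingHom.injective h1)
      simp only [hσ, hσ'] at h2
      exact Filter.Germ.coe_eq.1 h2
    have h3 : ∀ᶠ S in (u : Filter (Finset Γ)), γ ∈ S := by
      refine hu ?_
      filter_upwards [Filter.eventually_ge_atTop ({γ} : Finset Γ)] with S hS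
      exact hS (by simp)
    have h4 := Filter.eventually_all.2 fun i => Filter.eventually_all.2 (hev i)
    obtain ⟨S, hS1, hS2⟩ := (h3.and h4).exists
    exact hrr S γ hS1 hγ (by ext i j; exact hS2 i j)
end

section
/- Let Γ be a finitely generated group, Δ₀ a subgroup of Γ, n ≥ 1, and ρ₀ : Γ → GL(n,ℂ) a homomorphism. Suppose that for every finite subset S of Γ \ Δ₀ there exist homomorphisms ρ, ρ' : Γ → GL(n,ℂ) with ρ(δ) = ρ₀(δ) = ρ'(δ) for every δ ∈ Δ₀ and ρ(γ) ≠ ρ'(γ) for every γ ∈ S. Then there exists a homomorphism Φ : Γ → GL(n,ℂ) × GL(n,ℂ) such that for every γ ∈ Γ with γ ∉ Δ₀ there exists a polynomial P in the 2n² matrix-entry variables with complex coefficients vanishing at Φ(δ) for every δ ∈ Δ₀ but with P(Φ(γ)) ≠ 0. -/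
/-- Evaluate a polynomial in the `2n²` matrix-entry variables at a pair of matrices in
`GL(n, ℂ) × GL(n, ℂ)`. -/
noncomputable def evalAtGLPair {n : ℕ} (A : GL (Fin n) ℂ × GL (Fin n) ℂ)
    (P : MvPolynomial ((Fin n × Fin n) ⊕ (Fin n × Fin n)) ℂ) : ℂ :=
  MvPolynomial.eval
    (Sum.elim (fun p => (A.1 : Matrix (Fin n) (Fin n) ℂ) p.1 p.2)
              (fun p => (A.2 : Matrix (Fin n) (Fin n) ℂ) p.1 p.2)) P

open Cardinal in
theorem exists_algHom_aux (F K : Type) [Field F] [Field K] [Algebra F K] [Algebra F ℂ]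
    (hF : #F ≤ ℵ₀) (hK : #K ≤ #ℂ) : Nonempty (K →ₐ[F] ℂ) := by
  obtain ⟨s, hs⟩ := exists_isTranscendenceBasis F K
  obtain ⟨t, ht⟩ := exists_isTranscendenceBasis F ℂ
  have h1 : #ℂ = #t := IsAlgClosed.cardinal_eq_cardinal_transcendence_basis_of_aleph0_lt' _ ht hF
    (by rw [Cardinal.mk_complex]; exact Cardinal.aleph0_lt_continuum)
  have h2 : #s ≤ #t := ((Cardinal.mk_set_le s).trans hK).trans h1.le
  obtain ⟨e⟩ := h2
  have hw : AlgebraicIndependent F (fun i : s => ((e i : t) : ℂ)) := ht.1.comp e e.injective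
  let v : s → K := Subtype.val
  let A := Algebra.adjoin F (Set.range v)
  let f : A →ₐ[F] ℂ := (MvPolynomial.aeval (fun i : s => ((e i : t) : ℂ))).comp
    (hs.1.aevalEquiv.symm : A →ₐ[F] MvPolynomial s F)
  have hf : Function.Injective f := Function.Injective.comp (g := MvPolynomial.aeval (R := F) (fun i : s => ((e i : t) : ℂ))) hw
    hs.1.aevalEquiv.symm.injective
  letI : Algebra A ℂ := f.toRingHom.toAlgebra
  haveI : FaithfulSMul A ℂ := (faithfulSMul_iff_algebraMap_injective A ℂ).2 hf
  haveI : Algebra.IsAlgebraic A K := hs.isAlgebraic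
  haveI : IsScalarTower F A ℂ := IsScalarTower.of_algebraMap_eq' f.comp_algebraMap.symm
  exact ⟨(IsAlgClosed.lift (R := A) (S := K) (M := ℂ)).restrictScalars F⟩

open Cardinal in
theorem exists_theta_aux (T : Set ℂ) (hT : T.Countable) :
    ∃ θ : (ℕ → ℂ) →+* ℂ, (∀ c ∈ T, θ (fun _ => c) = c) ∧
      ∀ (m : ℕ) (f : Fin m × Fin m → ℕ → ℂ), (∃ N, ∀ k ≥ N, ∃ p, f p k ≠ 0) → ∃ p, θ (f p) ≠ 0 := by
  let F := Subfield.closure T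
  let U : Ultrafilter ℕ := Filter.hyperfilter ℕ
  let K := Filter.Germ (U : Filter ℕ) ℂ
  let q : (ℕ → ℂ) →+* K := Filter.Germ.coeRingHom (U : Filter ℕ)
  letI : Algebra F K := ((q.comp (algebraMap ℂ (ℕ → ℂ))).comp F.subtype).toAlgebra
  have hF : #F ≤ ℵ₀ := (Subfield.cardinalMk_closure_le_max T).trans
    (max_le (Cardinal.le_aleph0_iff_set_countable.2 hT) le_rfl)
  have hK : #K ≤ #ℂ := by
    have : #K ≤ #(ℕ → ℂ) := Cardinal.mk_le_of_surjective (f := q) Quotient.mk_surjective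
    refine this.trans (le_of_eq ?_)
    simp [Cardinal.mk_complex]
  obtain ⟨g⟩ := exists_algHom_aux F K hF hK
  refine ⟨(g : K →+* ℂ).comp q, fun c hc => ?_, fun m f ⟨N, hN⟩ => ?_⟩
  · exact g.commutes ⟨c, Subfield.subset_closure hc⟩
  · by_contra! h0
    have h1 : ∀ p, q (f p) = 0 := fun p => by
      apply (g : K →+* ℂ).injective
      rw [map_zero]; exact h0 p
    have h2 : ∀ᶠ k in (U : Filter ℕ), ∀ p, f p k = 0 :=
      Filter.eventually_all.2 fun p => Filter.Germ.coe_eq.1 (h1 p)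
    have h3 : ∀ᶠ k in (U : Filter ℕ), ∃ p, f p k ≠ 0 :=
      Nat.hyperfilter_le_atTop ((Filter.eventually_ge_atTop N).mono hN)
    obtain ⟨k, hk, p, hp⟩ := (h2.and h3).exists
    exact hp (hk p)

theorem exists_rep_aux {Γ : Type*} [Group Γ] {n : ℕ} (θ : (ℕ → ℂ) →+* ℂ)
    (r : ℕ → Γ →* GL (Fin n) ℂ) :
    ∃ σ : Γ →* GL (Fin n) ℂ, ∀ γ i j, (σ γ : Matrix (Fin n) (Fin n) ℂ) i j =
      θ (fun k => (r k γ : Matrix (Fin n) (Fin n) ℂ) i j) := by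
  let M : Γ →* Matrix (Fin n) (Fin n) ℂ :=
    { toFun := fun γ i j => θ (fun k => (r k γ : Matrix (Fin n) (Fin n) ℂ) i j)
      map_one' := by
        ext i j
        by_cases hij : i = j
        · subst hij
          simp only [map_one, Units.val_one, Matrix.one_apply_eq]
          exact map_one θ
        · simp only [map_one, Units.val_one, Matrix.one_apply_ne hij]
          exact map_zero θ
      map_mul' := by
        intro a b
        ext i j
        change _ = ∑ l, θ (fun k => (r k a : Matrix (Fin n) (Fin n) ℂ) i l) *
          θ (fun k => (r k b : Matrix (Fin n) (Fin n) ℂ) l j)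
        simp only [← map_mul, ← map_sum]
        congr 1
        ext k
        simp [Matrix.mul_apply] }
  exact ⟨M.toHomUnits, fun γ i j => rfl⟩

/-- Corollary 3.3: if `ρ₀` distinguishes `Δ₀` in `Γ`, then there is a representation
`Φ : Γ → GL(n,ℂ) × GL(n,ℂ)` for which `Φ(Δ₀)` is the intersection of `Φ(Γ)` with the
Zariski closure of `Φ(Δ₀)`. -/
theorem distinguished_to_zariski_closed {Γ : Type*} [Group Γ]
    (hΓ : Group.FG Γ) (Δ₀ : Subgroup Γ) (n : ℕ) (hn : 1 ≤ n)
    (ρ₀ : Γ →* GL (Fin n) ℂ)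
    (h : ∀ S : Finset Γ, (∀ γ ∈ S, γ ∉ Δ₀) →
      ∃ ρ ρ' : Γ →* GL (Fin n) ℂ,
        (∀ δ ∈ Δ₀, ρ δ = ρ₀ δ ∧ ρ' δ = ρ₀ δ) ∧ ∀ γ ∈ S, ρ γ ≠ ρ' γ) :
    ∃ Φ : Γ →* GL (Fin n) ℂ × GL (Fin n) ℂ,
      ∀ γ : Γ, γ ∉ Δ₀ →
        ∃ P : MvPolynomial ((Fin n × Fin n) ⊕ (Fin n × Fin n)) ℂ,
          (∀ δ ∈ Δ₀, evalAtGLPair (Φ δ) P = 0) ∧ evalAtGLPair (Φ γ) P ≠ 0 := by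
  classical
  haveI : Countable Γ := by
    obtain ⟨S, hS, f, hf⟩ := Group.fg_iff_exists_freeGroup_hom_surjective_finite.1 hΓ
    exact hf.countable
  obtain ⟨e, he⟩ := exists_surjective_nat Γ
  choose r r' hr hne using fun k : ℕ => h (((Finset.range k).image e).filter (· ∉ Δ₀))
    (fun γ hγ => (Finset.mem_filter.1 hγ).2)
  obtain ⟨θ, hθ, hθ0⟩ := exists_theta_aux
    (Set.range fun p : Γ × Fin n × Fin n => (ρ₀ p.1 : Matrix (Fin n) (Fin n) ℂ) p.2.1 p.2.2)
    (Set.countable_range _)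
  obtain ⟨σ, hσ⟩ := exists_rep_aux θ r
  obtain ⟨σ', hσ'⟩ := exists_rep_aux θ r'
  refine ⟨σ.prod σ', fun γ hγ => ?_⟩
  have key : ∃ i j, (σ γ : Matrix (Fin n) (Fin n) ℂ) i j ≠
      (σ' γ : Matrix (Fin n) (Fin n) ℂ) i j := by
    obtain ⟨a, rfl⟩ := he γ
    obtain ⟨p, hp⟩ := hθ0 n (fun p => (fun k => (r k (e a) : Matrix (Fin n) (Fin n) ℂ) p.1 p.2) -
      (fun k => (r' k (e a) : Matrix (Fin n) (Fin n) ℂ) p.1 p.2)) ⟨a + 1, fun k hk => by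
        by_contra! hcon
        refine hne k (e a) (Finset.mem_filter.2 ⟨Finset.mem_image_of_mem e
          (Finset.mem_range.2 (by omega)), hγ⟩) ?_
        ext i j
        exact sub_eq_zero.1 (hcon (i, j))⟩
    refine ⟨p.1, p.2, ?_⟩
    rw [hσ, hσ']
    rw [map_sub] at hp
    exact sub_ne_zero.1 hp
  obtain ⟨i, j, hij⟩ := key
  refine ⟨MvPolynomial.X (Sum.inl (i, j)) - MvPolynomial.X (Sum.inr (i, j)), fun δ hδ => ?_, ?_⟩
  · simp only [evalAtGLPair, map_sub, MvPolynomial.eval_X, Sum.elim_inl, Sum.elim_inr,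
      MonoidHom.prod_apply, hσ, hσ', (hr _ δ hδ).1, (hr _ δ hδ).2, sub_self]
  · simpa [evalAtGLPair, sub_eq_zero] using hij
end

section
/- Let H and K be groups with H nontrivial, and let Λ = H ∗ K be their free product, with canonical inclusions inl : H → Λ and inr : K → Λ. Then there exists an automorphism ψ of Λ whose set of fixed points is exactly the image of H; that is, for every x ∈ Λ, ψ(x) = x if and only if x lies in the range of inl. -/
open Monoid Monoid.Coprod

namespace FPAux

variable {H K : Type*} [Group H] [Group K]

/-- reindexing endomorphism -/
def re (K : Type*) [Group K] (f : H → H) :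
    CoprodI (fun _ : H => K) →* CoprodI (fun _ : H => K) :=
  CoprodI.lift fun i => (CoprodI.of (M := fun _ : H => K) (i := f i))

theorem re_of (f : H → H) (i : H) (k : K) :
    re K f (CoprodI.of (M := fun _ : H => K) (i := i) k)
      = CoprodI.of (M := fun _ : H => K) (i := f i) k := by
  simp only [re]
  exact CoprodI.lift_of _ _

theorem re_re (f g : H → H) (n : CoprodI (fun _ : H => K)) :
    re K f (re K g n) = re K (fun x => f (g x)) n := by
  induction n using CoprodI.induction_on with
  | one => simp
  | of i m => rw [re_of, re_of, re_of]
  | mul x y hx hy => simp only [map_mul, hx, hy]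

theorem re_id (n : CoprodI (fun _ : H => K)) : re K (fun x : H => x) n = n := by
  induction n using CoprodI.induction_on with
  | one => simp
  | of i m => rw [re_of]
  | mul x y hx hy => simp only [map_mul, hx, hy]

theorem re_fixed (δ : H) (hδ : δ ≠ 1) (n : CoprodI (fun _ : H => K))
    (h : re K (fun x => x * δ) n = n) : n = 1 := by
  classical
  obtain ⟨w, rfl⟩ := (CoprodI.Word.equiv (M := fun _ : H => K)).symm.surjective n
  change re K _ w.prod = w.prod at h
  change w.prod = 1
  let w' : CoprodI.Word (fun _ : H => K) :=
    { toList := w.toList.map fun l => ⟨l.1 * δ, l.2⟩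
      ne_one := by
        intro l hl
        obtain ⟨a, ha, rfl⟩ := List.mem_map.1 hl
        exact w.ne_one a ha
      chain_ne := by
        rw [List.isChain_map]
        exact w.chain_ne.imp fun a b hab => by simpa using hab }
  have hw' : w'.prod = re K (fun x => x * δ) w.prod := by
    simp only [CoprodI.Word.prod, w', map_list_prod, List.map_map]
    congr 1
  have e : w' = w :=
    (CoprodI.Word.equiv (M := fun _ : H => K)).symm.injective (hw'.trans h)
  have e2 : w.toList.map (fun l => (⟨l.1 * δ, l.2⟩ : Σ _ : H, K)) = w.toList :=
    congrArg CoprodI.Word.toList e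
  have e3 : w.toList = [] := by
    cases hl : w.toList with
    | nil => rfl
    | cons a l =>
      rw [hl, List.map_cons] at e2
      have := congrArg Sigma.fst (List.cons.inj e2).1
      exact absurd (by simpa using this) hδ
  simp [CoprodI.Word.prod, e3]

/-- the left translation action -/
def act (H K : Type*) [Group H] [Group K] : H →* MulAut (CoprodI (fun _ : H => K)) where
  toFun h :=
    { toFun := re K (fun x => h * x)
      invFun := re K (fun x => h⁻¹ * x)
      left_inv := fun n => by rw [re_re]; simp [re_id]
      right_inv := fun n => by rw [re_re]; simp [re_id]
      map_mul' := map_mul _ }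
  map_one' := by
    ext n
    change re K (fun x => 1 * x) n = n
    simp [re_id]
  map_mul' a b := by
    ext n
    change re K (fun x => a * b * x) n = re K (fun x => a * x) (re K (fun x => b * x) n)
    rw [re_re]; simp [mul_assoc]

theorem act_apply (h : H) (n : CoprodI (fun _ : H => K)) :
    act H K h n = re K (fun x => h * x) n := rfl

/-- map to the semidirect product -/
def F (H K : Type*) [Group H] [Group K] :
    H ∗ K →* (CoprodI (fun _ : H => K)) ⋊[act H K] H :=
  Coprod.lift SemidirectProduct.inr
    (SemidirectProduct.inl.comp (CoprodI.of (M := fun _ : H => K) (i := 1)))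

/-- conjugates of the right factor -/
def B (H K : Type*) [Group H] [Group K] : CoprodI (fun _ : H => K) →* H ∗ K :=
  CoprodI.lift fun i => (MulAut.conj (Coprod.inl i : H ∗ K)).toMonoidHom.comp Coprod.inr

theorem B_of (i : H) (k : K) : B H K (CoprodI.of (M := fun _ : H => K) (i := i) k)
    = Coprod.inl i * Coprod.inr k * (Coprod.inl i)⁻¹ := by
  simp only [B]
  exact CoprodI.lift_of _ _

/-- inverse map -/
def R (H K : Type*) [Group H] [Group K] :
    (CoprodI (fun _ : H => K)) ⋊[act H K] H →* H ∗ K :=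
  SemidirectProduct.lift (B H K) Coprod.inl (by
    intro g
    ext i k
    simp only [MonoidHom.comp_apply, MulEquiv.coe_toMonoidHom, act_apply, re_of, B_of,
      MulAut.conj_apply, map_mul]
    group)

theorem R_F (x : H ∗ K) : R H K (F H K x) = x := by
  have : (R H K).comp (F H K) = MonoidHom.id _ := by
    ext k
    · simp [R, F]
    · simp [R, F, B_of]
  exact DFunLike.congr_fun this x

/-- the endomorphism -/
def P (K : Type*) [Group K] (δ : H) : H ∗ K →* H ∗ K :=
  Coprod.lift Coprod.inl ((MulAut.conj (Coprod.inl δ : H ∗ K)).toMonoidHom.comp Coprod.inr)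

theorem P_P (δ ε : H) (h : δ * ε = 1) (x : H ∗ K) : P K δ (P K ε x) = x := by
  have : (P K δ).comp (P K ε) = MonoidHom.id _ := by
    obtain rfl := eq_inv_of_mul_eq_one_left h
    ext k
    · simp [P]
    · simp [P, mul_assoc]
  exact DFunLike.congr_fun this x

theorem F_P (δ : H) (x : H ∗ K) :
    (F H K (P K δ x)).left = re K (fun y => y * δ) (F H K x).left := by
  let S : (CoprodI (fun _ : H => K)) ⋊[act H K] H →* (CoprodI (fun _ : H => K)) ⋊[act H K] H :=
    SemidirectProduct.map (re K (fun y => y * δ)) (MonoidHom.id H) (by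
      intro g
      ext n
      simp [act_apply, re_of, mul_assoc])
  have : (F H K).comp (P K δ) = S.comp (F H K) := by
    apply Coprod.hom_ext
    · ext k <;> simp [P, F, S]
    · apply MonoidHom.ext
      intro k
      simp only [P, F, S, MonoidHom.comp_apply, Coprod.lift_apply_inr, Coprod.lift_apply_inl,
        MulEquiv.coe_toMonoidHom, MulAut.conj_apply, map_mul, map_inv,
        SemidirectProduct.map_inl, re_of]
      rw [← map_inv, ← SemidirectProduct.inl_aut, act_apply, re_of]
      simp
  exact congrArg SemidirectProduct.left (DFunLike.congr_fun this x)

end FPAux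

/-- Lemma 4.1: if `H` is a nontrivial group and `Λ = H ∗ K` is the free product of `H`
and `K`, then there is an automorphism of `Λ` whose fixed-point set is exactly the image
of `H`. -/
theorem free_product_aut_fixing_exactly_left_factor
    (H K : Type*) [Group H] [Group K] (hH : ∃ δ : H, δ ≠ 1) :
    ∃ ψ : (H ∗ K) ≃* (H ∗ K),
      ∀ x : H ∗ K, ψ x = x ↔ x ∈ (Coprod.inl : H →* H ∗ K).range := by
  obtain ⟨δ, hδ⟩ := hH
  refine ⟨{ toFun := FPAux.P K δ
            invFun := FPAux.P K δ⁻¹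
            left_inv := FPAux.P_P _ _ (by simp)
            right_inv := FPAux.P_P _ _ (by simp)
            map_mul' := map_mul _ }, fun x => ?_⟩
  change FPAux.P K δ x = x ↔ _
  constructor
  · intro h
    have h1 := FPAux.F_P δ x
    rw [h] at h1
    have h2 := FPAux.re_fixed δ hδ _ h1.symm
    refine ⟨(FPAux.F H K x).right, ?_⟩
    have h3 := FPAux.R_F x
    rw [← SemidirectProduct.inl_left_mul_inr_right (FPAux.F H K x), h2] at h3
    simpa [FPAux.R] using h3
  · rintro ⟨h, rfl⟩
    simp [FPAux.P]
end

section
/- Let H and K be groups, let Λ = H ∗ K be their free product with canonical inclusions inl : H → Λ and inr : K → Λ, and let δ ∈ H with δ ≠ 1. Let ψ : Λ → Λ be the homomorphism determined by ψ(inl h) = inl h for all h ∈ H and ψ(inr k) = (inl δ) · (inr k) · (inl δ)⁻¹ for all k ∈ K. Then ψ is an automorphism of Λ, and for every x ∈ Λ, ψ(x) = x if and only if x lies in the range of inl. -/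
open Monoid Monoid.Coprod

section aux
variable {H K : Type*} [Group H] [Group K]

/-- Elements whose normal form starts with a nontrivial letter of `K`. -/
inductive StartsK : H ∗ K → Prop
  | base (k : K) (hk : k ≠ 1) (h : H) : StartsK (inr k * inl h)
  | step (k : K) (hk : k ≠ 1) (h : H) (hh : h ≠ 1) (y : H ∗ K) (hy : StartsK y) :
      StartsK (inr k * (inl h * y))

theorem startsK_decomp (x : H ∗ K) :
    (∃ h : H, x = inl h) ∨ ∃ (h : H) (y : H ∗ K), StartsK y ∧ x = inl h * y := by
  induction x using Coprod.induction_on' with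
  | one => exact Or.inl ⟨1, by simp⟩
  | inl_mul a x ih =>
    rcases ih with ⟨h, rfl⟩ | ⟨h, y, hy, rfl⟩
    · exact Or.inl ⟨a * h, by simp⟩
    · exact Or.inr ⟨a * h, y, hy, by simp [mul_assoc]⟩
  | inr_mul k x ih =>
    by_cases hk : k = 1
    · subst hk; simpa using ih
    rcases ih with ⟨h, rfl⟩ | ⟨h, y, hy, rfl⟩
    · exact Or.inr ⟨1, _, .base k hk h, by simp⟩
    by_cases hh : h = 1
    · subst hh
      cases hy with
      | base k' hk' h' =>
        by_cases hkk : k * k' = 1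
        · refine Or.inl ⟨h', ?_⟩
          rw [map_one, one_mul, ← mul_assoc, ← map_mul, hkk, map_one, one_mul]
        · exact Or.inr ⟨1, _, .base _ hkk h', by simp [mul_assoc]⟩
      | step k' hk' h' hh' y hy =>
        by_cases hkk : k * k' = 1
        · refine Or.inr ⟨h', y, hy, ?_⟩
          rw [map_one, one_mul, ← mul_assoc, ← map_mul, hkk, map_one, one_mul]
        · exact Or.inr ⟨1, _, .step _ hkk h' hh' y hy, by simp [mul_assoc]⟩
    · exact Or.inr ⟨1, _, .step k hk h hh y hy, by simp⟩

/-- Auxiliary homomorphism to an indexed free product, used to act on words. -/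
noncomputable def toI (H K : Type*) [Group H] [Group K] :
    H ∗ K →* CoprodI (fun _ : Bool => H × K) :=
  Coprod.lift ((CoprodI.of (i := true)).comp (MonoidHom.inl H K))
    ((CoprodI.of (i := false)).comp (MonoidHom.inr H K))

theorem fstIdx_smul {M : Bool → Type*} [∀ i, Monoid (M i)] [∀ i, DecidableEq (M i)]
    {i : Bool} (m : M i) (hm : m ≠ 1)
    (w : CoprodI.Word M) (hw : w.fstIdx ≠ some i) :
    ((CoprodI.of m : CoprodI M) • w).fstIdx = some i := by
  rw [← CoprodI.Word.cons_eq_smul (h1 := hw) (h2 := hm)]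
  exact CoprodI.Word.fstIdx_cons ..

theorem fstIdx_inl [DecidableEq H] [DecidableEq K] (h : H) (hh : h ≠ 1)
    (w : CoprodI.Word (fun _ : Bool => H × K)) (hw : w.fstIdx ≠ some true) :
    (toI H K (inl h) • w).fstIdx = some true := by
  have e : toI H K (inl h) = CoprodI.of (M := fun _ : Bool => H × K) (i := true) (h, 1) := by
    simp [toI]
  rw [e]
  exact fstIdx_smul (M := fun _ : Bool => H × K) (i := true) (h, 1) (by simpa using hh) w hw

theorem fstIdx_inr [DecidableEq H] [DecidableEq K] (k : K) (hk : k ≠ 1)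
    (w : CoprodI.Word (fun _ : Bool => H × K)) (hw : w.fstIdx ≠ some false) :
    (toI H K (inr k) • w).fstIdx = some false := by
  have e : toI H K (inr k) = CoprodI.of (M := fun _ : Bool => H × K) (i := false) (1, k) := by
    simp [toI]
  rw [e]
  exact fstIdx_smul (M := fun _ : Bool => H × K) (i := false) (1, k) (by simpa using hk) w hw

theorem StartsK.fstIdx [DecidableEq H] [DecidableEq K] {y : H ∗ K} (hy : StartsK y) :
    (toI H K y • (CoprodI.Word.empty : CoprodI.Word (fun _ : Bool => H × K))).fstIdx
      = some false := by
  have h0 (i : Bool) : (CoprodI.Word.empty : CoprodI.Word (fun _ : Bool => H × K)).fstIdx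
      ≠ some i := by simp [CoprodI.Word.fstIdx, CoprodI.Word.empty]
  induction hy with
  | base k hk h =>
    rw [map_mul, mul_smul]
    apply fstIdx_inr k hk
    by_cases hh : h = 1
    · rw [hh, map_one, map_one, one_smul]
      exact h0 _
    · rw [fstIdx_inl h hh _ (h0 _)]
      simp
  | step k hk h hh y hy ih =>
    rw [map_mul, map_mul, mul_smul, mul_smul]
    apply fstIdx_inr k hk
    rw [fstIdx_inl h hh _ (by rw [ih]; simp)]
    simp

theorem StartsK.ne {y y' : H ∗ K} (hy : StartsK y) (hy' : StartsK y') (h : H) (hh : h ≠ 1) :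
    y ≠ inl h * y' := by
  classical
  rintro rfl
  have h1 := hy.fstIdx
  have h2 := hy'.fstIdx
  rw [map_mul, mul_smul, fstIdx_inl h hh _ (by rw [h2]; simp)] at h1
  simp at h1

/-- The twist. -/
noncomputable def twist (K : Type*) [Group K] (δ : H) : H ∗ K →* H ∗ K :=
  Coprod.lift (Coprod.inl : H →* H ∗ K)
        ((MulAut.conj ((Coprod.inl : H →* H ∗ K) δ)).toMonoidHom.comp
          (Coprod.inr : K →* H ∗ K))

@[simp] theorem twist_inl (δ h : H) : twist K δ (inl h) = inl h := by simp [twist]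

@[simp] theorem twist_inr (δ : H) (k : K) :
    twist K δ (inr k) = inl δ * inr k * (inl δ)⁻¹ := by simp [twist]

theorem twist_inv (δ ε : H) (h : δ * ε = 1) (x : H ∗ K) : twist K δ (twist K ε x) = x := by
  obtain rfl := eq_inv_of_mul_eq_one_right h
  have : (twist K δ).comp (twist K δ⁻¹) = MonoidHom.id _ := by
    ext x
    · simp
    · simp [mul_assoc]
  exact DFunLike.congr_fun this x

theorem StartsK.twist (δ : H) {y : H ∗ K} (hy : StartsK y) :
    ∃ y', StartsK y' ∧ twist K δ y = inl δ * y' := by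
  induction hy with
  | base k hk h => exact ⟨_, .base k hk (δ⁻¹ * h), by simp [mul_assoc]⟩
  | step k hk h hh y hy ih =>
    obtain ⟨y', hy', e⟩ := ih
    refine ⟨_, .step k hk (δ⁻¹ * h * δ) ?_ y' hy', by simp [mul_assoc, e]⟩
    intro h1
    apply hh
    have : h = δ * (δ⁻¹ * h * δ) * δ⁻¹ := by group
    rw [this, h1]; simp

end aux

/-- Lemma 4.1 (explicit form): given `δ ≠ 1` in `H`, the endomorphism `ψ` of the free
product `H ∗ K` that is the identity on `H` and conjugation by `δ` on `K` is an
automorphism whose fixed-point set is exactly the image of `H`. -/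
theorem free_product_conj_twist_is_aut_fixing_exactly_left_factor
    (H K : Type*) [Group H] [Group K] (δ : H) (hδ : δ ≠ 1) :
    Function.Bijective
      (Coprod.lift (Coprod.inl : H →* H ∗ K)
        ((MulAut.conj ((Coprod.inl : H →* H ∗ K) δ)).toMonoidHom.comp
          (Coprod.inr : K →* H ∗ K))) ∧
    ∀ x : H ∗ K,
      Coprod.lift (Coprod.inl : H →* H ∗ K)
        ((MulAut.conj ((Coprod.inl : H →* H ∗ K) δ)).toMonoidHom.comp
          (Coprod.inr : K →* H ∗ K)) x = x ↔
      x ∈ (Coprod.inl : H →* H ∗ K).range := by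

  change Function.Bijective (twist K δ) ∧ ∀ x : H ∗ K, twist K δ x = x ↔ _
  refine ⟨Function.bijective_iff_has_inverse.2 ⟨twist K δ⁻¹, twist_inv _ _ (by simp),
    twist_inv _ _ (by simp)⟩, fun x => ⟨fun hx => ?_, ?_⟩⟩
  · rcases startsK_decomp x with ⟨h, rfl⟩ | ⟨h, y, hy, rfl⟩
    · exact ⟨h, rfl⟩
    · obtain ⟨y', hy', e⟩ := hy.twist δ
      rw [map_mul, twist_inl, e] at hx
      exact absurd (mul_left_cancel hx).symm (hy.ne hy' δ hδ)
  · rintro ⟨h, rfl⟩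
    simp
end

section
/- Let n ≥ 1, let Γ be a finitely generated subgroup of GL(n, ℂ), and let 𝒫 be a set of polynomials in the n² matrix-entry variables with complex coefficients such that every coefficient of every P ∈ 𝒫 is algebraic over ℚ. Let Δ₀ = {γ ∈ Γ : P(γ) = 0 for all P ∈ 𝒫}, and assume Δ₀ is a subgroup of Γ. Then Δ₀ is separable in Γ: for every γ ∈ Γ with γ ∉ Δ₀ there exist a finite group Q and a homomorphism φ : Γ → Q such that φ(γ) ∉ φ(Δ₀). -/
theorem aux_int_jacobson : IsJacobsonRing ℤ := by
  rw [isJacobsonRing_iff_prime_eq]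
  intro P hP
  by_cases h : P = ⊥
  · subst h
    rw [eq_bot_iff]
    intro x hx
    rw [Ideal.mem_jacobson_bot] at hx
    have := hx x
    rw [Int.isUnit_iff] at this
    rw [Ideal.mem_bot]
    rcases this with h | h
    · have : x * x = 0 := by linarith
      simpa using this
    · nlinarith [mul_self_nonneg x]
  · have := hP.isMaximal h
    exact Ideal.jacobson_eq_self_of_isMaximal

theorem aux_finite_field (K : Type) [Field K] [Algebra.FiniteType ℤ K] : Finite K := by
  have := aux_int_jacobson
  have hfin : Module.Finite ℤ K := finite_of_finite_type_of_isJacobsonRing ℤ K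
  obtain ⟨p, hp⟩ := CharP.exists K
  by_cases h0 : p = 0
  · subst h0
    have : CharZero K := CharP.charP_to_charZero K
    have hinj : Function.Injective (algebraMap ℤ K) := by
      intro a b hab
      simpa using hab
    exact absurd (isField_of_isIntegral_of_isField hinj (Field.toIsField K)) Int.not_isField
  · apply Module.finite_of_fg_torsion K
    intro x
    refine ⟨⟨(p : ℤ), by simpa using h0⟩, ?_⟩
    change (p : ℤ) • x = 0
    simp

theorem qbar_defined_subgroup_separable (n : ℕ) (hn : 1 ≤ n)
    (Γ : Subgroup (GL (Fin n) ℂ)) (hΓ : Γ.FG)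
    (Ps : Set (MvPolynomial (Fin n × Fin n) ℂ))
    (halg : ∀ P ∈ Ps, ∀ m : (Fin n × Fin n) →₀ ℕ, IsAlgebraic ℚ (MvPolynomial.coeff m P))
    (Δ₀ : Subgroup Γ)
    (hΔ₀ : ∀ γ : Γ, γ ∈ Δ₀ ↔ ∀ P ∈ Ps, evalAtGL (γ : GL (Fin n) ℂ) P = 0) :
    ∀ γ : Γ, γ ∉ Δ₀ →
      ∃ (Q : Type) (_ : Group Q) (_ : Fintype Q) (φ : Γ →* Q),
        φ γ ∉ Δ₀.map φ := by
  classical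
  intro γ hγ
  rw [hΔ₀] at hγ
  push Not at hγ
  obtain ⟨P, hP, hne⟩ := hγ
  obtain ⟨S, hS⟩ := hΓ
  -- the finitely generated coefficient ring
  let E : GL (Fin n) ℂ → Finset ℂ := fun g =>
    Finset.univ.image (fun p : Fin n × Fin n => (g : Matrix (Fin n) (Fin n) ℂ) p.1 p.2)
  let T : Finset ℂ := (S.biUnion E ∪ S.biUnion (fun g => E g⁻¹)) ∪
    (P.coeffs ∪ {(evalAtGL (γ : GL (Fin n) ℂ) P)⁻¹})
  let R : Subalgebra ℤ ℂ := Algebra.adjoin ℤ (T : Set ℂ)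
  have hT : ∀ x ∈ T, x ∈ R := fun x hx => Algebra.subset_adjoin hx
  have hfg : Algebra.FiniteType ℤ R :=
    (Subalgebra.fg_iff_finiteType R).1 (Subalgebra.fg_adjoin_finset T)
  let ι : R →+* ℂ := R.val.toRingHom
  have hι : Function.Injective ι := Subtype.val_injective
  let F : GL (Fin n) R →* GL (Fin n) ℂ := Matrix.GeneralLinearGroup.map ι
  have hFapp : ∀ (g : GL (Fin n) R) i j, (F g) i j = ι (g i j) := fun g i j => rfl
  have hF : Function.Injective F := by
    intro a b hab
    ext i j
    have := congrArg (fun g : GL (Fin n) ℂ => g i j) hab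
    exact congrArg Subtype.val (hι this)
  have hΓF : Γ ≤ F.range := by
    rw [← hS, Subgroup.closure_le]
    intro g hg
    have h1 : ∀ i j, (g : Matrix (Fin n) (Fin n) ℂ) i j ∈ R := fun i j => hT _ (by
      refine Finset.mem_union_left _ (Finset.mem_union_left _ (Finset.mem_biUnion.2 ⟨g, hg, ?_⟩))
      exact Finset.mem_image.2 ⟨(i, j), Finset.mem_univ _, rfl⟩)
    have h2 : ∀ i j, ((g⁻¹ : GL (Fin n) ℂ) : Matrix (Fin n) (Fin n) ℂ) i j ∈ R := fun i j => hT _ (by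
      refine Finset.mem_union_left _ (Finset.mem_union_right _ (Finset.mem_biUnion.2 ⟨g, hg, ?_⟩))
      exact Finset.mem_image.2 ⟨(i, j), Finset.mem_univ _, rfl⟩)
    let A : Matrix (Fin n) (Fin n) R := fun i j => ⟨_, h1 i j⟩
    let B : Matrix (Fin n) (Fin n) R := fun i j => ⟨_, h2 i j⟩
    have hinj : Function.Injective (ι.mapMatrix : Matrix (Fin n) (Fin n) R →+* _) :=
      Matrix.map_injective hι
    have hA : ι.mapMatrix A = (g : Matrix (Fin n) (Fin n) ℂ) := rfl
    have hB : ι.mapMatrix B = ((g⁻¹ : GL (Fin n) ℂ) : Matrix (Fin n) (Fin n) ℂ) := rfl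
    refine ⟨⟨A, B, hinj ?_, hinj ?_⟩, ?_⟩
    · rw [map_mul, hA, hB, map_one]; exact g.mul_inv
    · rw [map_mul, hA, hB, map_one]; exact g.inv_mul
    · ext i j; rfl
  let e := MonoidHom.ofInjective hF
  let ψ : Γ →* GL (Fin n) R := e.symm.toMonoidHom.comp (Subgroup.inclusion hΓF)
  have hψ : ∀ g : Γ, F (ψ g) = g := fun g =>
    congrArg Subtype.val (e.apply_symm_apply (Subgroup.inclusion hΓF g))
  obtain ⟨P', hP'⟩ : P ∈ Set.range (MvPolynomial.map ι) := by
    rw [MvPolynomial.mem_range_map_iff_coeffs_subset]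
    intro c hc
    exact ⟨⟨c, hT c (Finset.mem_union_right _ (Finset.mem_union_left _ hc))⟩, rfl⟩
  -- evaluation over the coefficient ring
  let ev : GL (Fin n) R → R := fun g => MvPolynomial.eval (fun p => g p.1 p.2) P'
  have hev : ∀ g : Γ, ι (ev (ψ g)) = evalAtGL (g : GL (Fin n) ℂ) P := by
    intro g
    rw [← hψ g, ← hP', evalAtGL, MvPolynomial.eval_map]
    change ι (MvPolynomial.eval₂ _ _ P') = _
    rw [MvPolynomial.hom_eval₂]
    rfl
  let u : R := ⟨(evalAtGL (γ : GL (Fin n) ℂ) P)⁻¹,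
    hT _ (Finset.mem_union_right _ (Finset.mem_union_right _ (Finset.mem_singleton_self _)))⟩
  have hu : ev (ψ γ) * u = 1 := by
    apply hι
    rw [map_mul, hev, map_one]
    exact mul_inv_cancel₀ hne
  obtain ⟨m, hm⟩ := Ideal.exists_maximal R
  let _ : Field (R ⧸ m) := Ideal.Quotient.field m
  have hft : Algebra.FiniteType ℤ (R ⧸ m) :=
    Algebra.FiniteType.of_surjective (Ideal.Quotient.mkₐ ℤ m) (Ideal.Quotient.mkₐ_surjective ℤ m)
  have hfin : Finite (R ⧸ m) := by
    refine @aux_finite_field (R ⧸ m) _ ?_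
    exact hft
  let q : R →+* R ⧸ m := Ideal.Quotient.mk m
  let φ : Γ →* GL (Fin n) (R ⧸ m) := (Matrix.GeneralLinearGroup.map q).comp ψ
  have hφ : ∀ g : Γ, q (ev (ψ g)) =
      MvPolynomial.eval₂ q (fun p => (φ g) p.1 p.2) P' := by
    intro g
    change q (MvPolynomial.eval₂ _ _ P') = _
    rw [MvPolynomial.hom_eval₂]
    rfl
  refine ⟨GL (Fin n) (R ⧸ m), inferInstance, Fintype.ofFinite _, φ, ?_⟩
  rintro ⟨δ, hδ, hδγ⟩
  have h0 : ev (ψ δ) = 0 := by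
    apply hι
    rw [hev, map_zero]
    exact (hΔ₀ δ).1 hδ P hP
  have h1 : q (ev (ψ γ)) = 0 := by
    rw [hφ, ← hδγ, ← hφ, h0, map_zero]
  have h2 := congrArg q hu
  rw [map_mul, h1, zero_mul, map_one] at h2
  exact zero_ne_one h2
end

section
/- Let r ≥ 2 and let Γ be the free group of rank r. If Δ₀ is a finitely generated subgroup of Γ, then there exist n ≥ 1 and an injective group homomorphism ρ : Γ → GL(n, ℂ) such that every matrix entry of ρ(γ) is algebraic over ℚ for every γ ∈ Γ, and for every γ ∈ Γ with γ ∉ Δ₀ there exists a polynomial P in the n² matrix-entry variables with complex coefficients such that P vanishes at ρ(δ) for every δ ∈ Δ₀ but P(ρ(γ)) ≠ 0. -/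
namespace FreeZar

open Matrix

/-- The parabolic matrix fixing `(t,1)`. -/
def par (t c : ℚ) : Matrix (Fin 2) (Fin 2) ℚ := !![1 + c * t, - c * t ^ 2; c, 1 - c * t]

theorem par_mul (t c d : ℚ) : par t c * par t d = par t (c + d) := by
  ext i j
  fin_cases i <;> fin_cases j <;> simp [par, Matrix.mul_apply, Fin.sum_univ_two] <;> ring

theorem par_zero (t : ℚ) : par t 0 = 1 := by
  ext i j
  fin_cases i <;> fin_cases j <;> simp [par]

/-- The parabolic as a unit. -/
def parU (t : ℚ) : (Matrix (Fin 2) (Fin 2) ℚ)ˣ where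
  val := par t 2
  inv := par t (-2)
  val_inv := by rw [par_mul, add_neg_cancel, par_zero]
  inv_val := by rw [par_mul, neg_add_cancel, par_zero]

/-- Nonzero vectors. -/
abbrev NZ := {v : Fin 2 → ℚ // v ≠ 0}

noncomputable instance nzAction : MulAction (Matrix (Fin 2) (Fin 2) ℚ)ˣ NZ where
  smul g v := ⟨g.1 *ᵥ v.1, fun h => v.2 (by
    have h2 : g⁻¹.1 *ᵥ (g.1 *ᵥ v.1) = g⁻¹.1 *ᵥ 0 := by rw [h]
    rw [Matrix.mulVec_mulVec, ← Units.val_mul, inv_mul_cancel, Units.val_one,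
      Matrix.one_mulVec, Matrix.mulVec_zero] at h2
    exact h2)⟩
  one_smul v := Subtype.ext (by
    change (1 : Matrix (Fin 2) (Fin 2) ℚ) *ᵥ v.1 = v.1
    simp)
  mul_smul g h v := Subtype.ext (by
    change (g.1 * h.1) *ᵥ v.1 = g.1 *ᵥ (h.1 *ᵥ v.1)
    rw [Matrix.mulVec_mulVec])

theorem smul_val (g : (Matrix (Fin 2) (Fin 2) ℚ)ˣ) (v : NZ) : (g • v).1 = g.1 *ᵥ v.1 := rfl

theorem nz_aux (v : NZ) (t s : ℚ) (h : 3 ≤ |t - s|)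
    (h1 : (v.1 0 - t * v.1 1) ^ 2 ≤ v.1 1 ^ 2)
    (h2 : (v.1 0 - s * v.1 1) ^ 2 ≤ v.1 1 ^ 2) : False := by
  rw [sq_le_sq] at h1 h2
  have h3 : |(t - s) * v.1 1| ≤ |v.1 0 - s * v.1 1| + |v.1 0 - t * v.1 1| := by
    have h0 : (t - s) * v.1 1 = (v.1 0 - s * v.1 1) - (v.1 0 - t * v.1 1) := by ring
    rw [h0]
    exact abs_sub _ _
  rw [abs_mul] at h3
  have h4 : |v.1 1| = 0 := by
    nlinarith [abs_nonneg (v.1 1)]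
  rw [abs_eq_zero] at h4
  rw [h4] at h1
  apply v.2
  ext i
  fin_cases i
  · simpa using h1
  · exact h4

theorem free_faithful {ι : Type} [Finite ι] [Nontrivial ι] :
    ∃ a : ι → (Matrix (Fin 2) (Fin 2) ℚ)ˣ, Function.Injective (FreeGroup.lift a) := by
  classical
  obtain ⟨n, ⟨e⟩⟩ := Finite.exists_equiv_fin ι
  let t : ι → ℚ := fun i => 3 * ((e i : ℕ) : ℚ)
  have ht : ∀ i j, i ≠ j → 3 ≤ |t i - t j| := by
    intro i j hij
    have h1 : ((e i : ℕ) : ℤ) - ((e j : ℕ) : ℤ) ≠ 0 := by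
      intro h
      apply hij
      apply e.injective
      apply Fin.ext
      omega
    have h2 : (1 : ℚ) ≤ |((e i : ℕ) : ℚ) - ((e j : ℕ) : ℚ)| := by
      exact_mod_cast Int.one_le_abs h1
    have h3 : t i - t j = 3 * (((e i : ℕ) : ℚ) - ((e j : ℕ) : ℚ)) := by simp only [t]; ring
    rw [h3, abs_mul]
    norm_num
    exact h2
  let X : ι → Set NZ := fun i => {v | (v.1 0 - t i * v.1 1) ^ 2 ≤ v.1 1 * (v.1 0 - t i * v.1 1)}
  let Y : ι → Set NZ := fun i => {v | v.1 1 * (v.1 0 - t i * v.1 1) < - (v.1 0 - t i * v.1 1) ^ 2}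
  have hXs : ∀ i v, v ∈ X i → (v.1 0 - t i * v.1 1) ^ 2 ≤ v.1 1 ^ 2 := by
    intro i v hv
    simp only [X, Set.mem_ofPred_eq] at hv
    nlinarith [sq_nonneg (v.1 1 - (v.1 0 - t i * v.1 1))]
  have hYs : ∀ i v, v ∈ Y i → (v.1 0 - t i * v.1 1) ^ 2 ≤ v.1 1 ^ 2 := by
    intro i v hv
    simp only [Y, Set.mem_ofPred_eq] at hv
    nlinarith [sq_nonneg (v.1 1 + (v.1 0 - t i * v.1 1))]
  refine ⟨fun i => parU (t i), FreeGroup.injective_lift_of_ping_pong _ X Y ?_ ?_ ?_ ?_ ?_ ?_⟩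
  · intro i
    refine ⟨⟨![t i, 1], fun h => ?_⟩, ?_⟩
    · have := congrFun h 1
      simp at this
    · simp [X]
  · intro i j hij
    exact Set.disjoint_left.2 fun v h1 h2 => nz_aux v _ _ (ht i j hij) (hXs i v h1) (hXs j v h2)
  · intro i j hij
    exact Set.disjoint_left.2 fun v h1 h2 => nz_aux v _ _ (ht i j hij) (hYs i v h1) (hYs j v h2)
  · intro i j
    refine Set.disjoint_left.2 fun v h1 h2 => ?_
    by_cases hij : i = j
    · subst hij
      simp only [X, Y, Set.mem_ofPred_eq] at h1 h2
      nlinarith [sq_nonneg (v.1 0 - t i * v.1 1)]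
    · exact nz_aux v _ _ (ht i j hij) (hXs i v h1) (hYs j v h2)
  · rintro i _ ⟨v, hv, rfl⟩
    simp only [X, Y, Set.mem_ofPred_eq, Set.mem_compl_iff, not_lt] at hv ⊢
    simp only [smul_val, parU, par]
    simp [Matrix.mulVec, dotProduct, Fin.sum_univ_two]
    nlinarith
  · rintro i _ ⟨v, hv, rfl⟩
    simp only [X, Y, Set.mem_ofPred_eq, Set.mem_compl_iff, not_le] at hv ⊢
    have hval : ((parU (t i))⁻¹).1 = par (t i) (-2) := rfl
    simp only [smul_val, Pi.inv_apply, hval, par]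
    simp [Matrix.mulVec, dotProduct, Fin.sum_univ_two]
    nlinarith

section Graph

variable {ι V : Type} (p : ι → Equiv.Perm V) (c : ι → V → Bool)

/-- Endpoint of the path. -/
def act : List (ι × Bool) → V → V
  | [], x => x
  | (i, true) :: L, x => p i (act L x)
  | (i, false) :: L, x => (p i).symm (act L x)

/-- Marked label of the path. -/
def lab : List (ι × Bool) → V → List ((ι × Bool) × Bool)
  | [], _ => []
  | (i, true) :: L, x => ((i, c i (act p L x)), true) :: lab L x
  | (i, false) :: L, x => ((i, c i ((p i).symm (act p L x))), false) :: lab L x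

/-- The trivial marking. -/
def tm (a : ι × Bool) : (ι × Bool) × Bool := ((a.1, false), a.2)

theorem lab_unmark (L : List (ι × Bool)) (x : V) :
    (lab p c L x).map (fun a => (a.1.1, a.2)) = L := by
  induction L with
  | nil => rfl
  | cons a L ih =>
    obtain ⟨i, _ | _⟩ := a <;> simp [lab, ih]

theorem reduced_of_map {L : List ((ι × Bool) × Bool)}
    (h : FreeGroup.IsReduced (L.map (fun a => (a.1.1, a.2)))) : FreeGroup.IsReduced L := by
  unfold FreeGroup.IsReduced at *
  rw [List.isChain_map] at h
  exact h.imp fun a b hab h1 => hab (by simp [h1])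

variable [Fintype V] [DecidableEq V] {R : Type} [Ring R] (U : ι × Bool → Rˣ)

/-- The monomial matrix of a generator. -/
def mono (i : ι) : (Matrix V V R)ˣ where
  val := Matrix.of fun y x => if y = p i x then (U (i, c i x)).1 else 0
  inv := Matrix.of fun y x => if y = (p i).symm x then ((U (i, c i y))⁻¹).1 else 0
  val_inv := by
    ext y x
    simp [Matrix.mul_apply, Matrix.one_apply]
  inv_val := by
    ext y x
    simp only [Matrix.mul_apply, Matrix.of_apply, Matrix.one_apply]
    rw [Finset.sum_eq_single (p i x)]
    · by_cases h : y = x <;> simp [h]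
    · intro b _ hb
      simp [hb]
    · simp

theorem mono_mk (L : List (ι × Bool)) (y x : V) :
    (FreeGroup.lift (mono p c U) (FreeGroup.mk L)).1 y x =
      if y = act p L x then (FreeGroup.lift U (FreeGroup.mk (lab p c L x))).1 else 0 := by
  induction L generalizing y with
  | nil => 
    simp only [FreeGroup.lift_mk, lab, act]
    simp [Matrix.one_apply]
  | cons a L ih =>
    obtain ⟨i, b⟩ := a
    rw [FreeGroup.lift_mk] at ih ⊢
    rw [List.map_cons, List.prod_cons, Units.val_mul, Matrix.mul_apply]
    simp only [ih]
    cases b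
    · simp only [lab, act, FreeGroup.lift_mk, List.map_cons, List.prod_cons, Units.val_mul]
      simp only [cond_false, mul_ite, mul_zero, Finset.sum_ite_eq', Finset.sum_ite_eq, Finset.mem_univ, if_true]
      change (if y = _ then _ else (0:R)) * _ = _
      split_ifs with h
      · subst h; rfl
      · simp
    · simp only [lab, act, FreeGroup.lift_mk, List.map_cons, List.prod_cons, Units.val_mul]
      simp only [cond_true, mul_ite, mul_zero, Finset.sum_ite_eq', Finset.sum_ite_eq, Finset.mem_univ, if_true]
      change (if y = _ then _ else (0:R)) * _ = _
      split_ifs with h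
      · rfl
      · simp

end Graph

theorem exists_graph {ι : Type} (D : Subgroup (FreeGroup ι)) (S : Set (FreeGroup ι))
    (hS : S.Finite) (hSD : S ⊆ D) [DecidableEq ι] :
    ∃ (V : Type) (_ : Fintype V) (_ : DecidableEq V) (p : ι → Equiv.Perm V) (c : ι → V → Bool)
      (o b : V), (∀ L, act p L o = o ∧ lab p c L o = L.map tm) ∧
      (∀ s ∈ S, act p s.toWord b = b ∧ lab p c s.toWord b = s.toWord.map tm) ∧
      (∀ L, act p L b = b → lab p c L b = L.map tm → FreeGroup.mk L ∈ D) := by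
  classical
  let base : FreeGroup ι ⧸ D := ((1 : FreeGroup ι) : FreeGroup ι ⧸ D)
  let W : Set (FreeGroup ι ⧸ D) :=
    {base} ∪ ⋃ s ∈ S, (fun L => FreeGroup.mk L • base) '' {L | L ∈ s.toWord.tails}
  have hW : W.Finite := by
    refine (Set.finite_singleton _).union (hS.biUnion fun s _ => Set.Finite.image _ ?_)
    exact List.finite_toSet _
  have hWs : ∀ s ∈ S, ∀ L, L <:+ s.toWord → FreeGroup.mk L • base ∈ W := by
    intro s hs L hL
    refine Or.inr (Set.mem_biUnion hs ⟨L, ?_, rfl⟩)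
    simpa using hL
  have hfin : Finite W := hW
  have hπ : ∀ i : ι, ∃ σ : Equiv.Perm W, ∀ x : W, ∀ h : FreeGroup.of i • x.1 ∈ W,
      σ x = ⟨FreeGroup.of i • x.1, h⟩ := by
    intro i
    obtain ⟨σ, hσ⟩ := Equiv.Perm.exists_extending_pair
      (α := {x : W // FreeGroup.of i • x.1 ∈ W}) (β := W) (fun x => x.1)
      (fun x => ⟨FreeGroup.of i • x.1.1, x.2⟩) Subtype.val_injective (by
        intro x y hxy
        have := congrArg Subtype.val hxy
        exact Subtype.ext (Subtype.ext (MulAction.injective _ this)))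
    exact ⟨σ, fun x h => hσ ⟨x, h⟩⟩
  choose σ hσ using hπ
  have : Fintype W := Fintype.ofFinite W
  let b : W := ⟨base, Or.inl rfl⟩
  let p : ι → Equiv.Perm (Option W) := fun i => (σ i).optionCongr
  let c : ι → Option W → Bool := fun i x => x.elim false
    (fun x => decide (¬ FreeGroup.of i • x.1 ∈ W))
  have pS : ∀ i x, p i (some x) = some (σ i x) := fun i x => rfl
  have pS' : ∀ i x, (p i).symm (some x) = some ((σ i).symm x) := fun i x => rfl
  have cS : ∀ i x, c i (some x) = false ↔ FreeGroup.of i • x.1 ∈ W := by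
    intro i x
    simp [c]
  have mkt : ∀ (i : ι) (L : List (ι × Bool)), FreeGroup.mk ((i, true) :: L) = FreeGroup.of i * FreeGroup.mk L := by
    intro i L; rfl
  have mkf : ∀ (i : ι) (L : List (ι × Bool)), FreeGroup.mk ((i, false) :: L) = (FreeGroup.of i)⁻¹ * FreeGroup.mk L := by
    intro i L; rfl
  refine ⟨Option W, inferInstance, inferInstance, p, c, none, some b, ?_, ?_, ?_⟩
  · intro L
    induction L with
    | nil => exact ⟨rfl, rfl⟩
    | cons a L ih =>
      obtain ⟨i, _ | _⟩ := a
      · simp only [act, lab, ih]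
        exact ⟨rfl, rfl⟩
      · simp only [act, lab, ih]
        exact ⟨rfl, rfl⟩
  · have key : ∀ L : List (ι × Bool), (∀ L', L' <:+ L → FreeGroup.mk L' • base ∈ W) →
        ∃ z : W, act p L (some b) = some z ∧ z.1 = FreeGroup.mk L • base ∧
          lab p c L (some b) = L.map tm := by
      intro L
      induction L with
      | nil => 
        intro _
        exact ⟨b, rfl, (one_smul _ _).symm, rfl⟩
      | cons a L ih =>
        intro h
        obtain ⟨z, h1, h2, h3⟩ := ih fun L' hL' => h L' (hL'.trans (List.suffix_cons _ _))
        have h0 := h _ List.suffix_rfl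
        obtain ⟨i, _ | _⟩ := a
        · rw [mkf, mul_smul, ← h2] at h0
          let y : W := ⟨_, h0⟩
          have hy : FreeGroup.of i • y.1 = z.1 := smul_inv_smul _ _
          have hy' : FreeGroup.of i • y.1 ∈ W := by rw [hy]; exact z.2
          have hz : (σ i).symm z = y := by
            rw [Equiv.symm_apply_eq, hσ i y hy']
            exact Subtype.ext hy.symm
          refine ⟨y, ?_, ?_, ?_⟩
          · simp only [act, h1, pS', hz]
          · rw [mkf, mul_smul, ← h2]
          · simp only [lab, h1, pS', hz, h3, (cS i y).2 hy']
            rfl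
        · rw [mkt, mul_smul, ← h2] at h0
          refine ⟨⟨_, h0⟩, ?_, ?_, ?_⟩
          · simp only [act, h1, pS, hσ i z h0]
          · rw [mkt, mul_smul, ← h2]
          · simp only [lab, h1, h3, (cS i z).2 h0]
            rfl
    intro s hs
    obtain ⟨z, h1, h2, h3⟩ := key s.toWord (hWs s hs)
    refine ⟨?_, h3⟩
    rw [h1]
    congr 1
    apply Subtype.ext
    rw [h2, FreeGroup.mk_toWord]
    change ((s * 1 : FreeGroup ι) : FreeGroup ι ⧸ D) = ((1 : FreeGroup ι) : FreeGroup ι ⧸ D)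
    rw [mul_one, eq_comm, QuotientGroup.eq]
    simpa using hSD hs
  · have key : ∀ L : List (ι × Bool), lab p c L (some b) = L.map tm →
        ∃ z : W, act p L (some b) = some z ∧ z.1 = FreeGroup.mk L • base := by
      intro L
      induction L with
      | nil => 
        intro _
        exact ⟨b, rfl, (one_smul _ _).symm⟩
      | cons a L ih =>
        intro h
        obtain ⟨i, _ | _⟩ := a
        · simp only [lab, List.map_cons, List.cons.injEq, tm, Prod.mk.injEq, true_and,
            and_true] at h
          obtain ⟨z, h1, h2⟩ := ih h.2
          have h4 := h.1
          rw [h1, pS', cS] at h4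
          refine ⟨(σ i).symm z, by simp only [act, h1, pS'], ?_⟩
          have h5 := hσ i _ h4
          rw [Equiv.apply_symm_apply] at h5
          rw [mkf, mul_smul, ← h2, eq_inv_smul_iff]
          exact (congrArg Subtype.val h5).symm
        · simp only [lab, List.map_cons, List.cons.injEq, tm, Prod.mk.injEq, true_and,
            and_true] at h
          obtain ⟨z, h1, h2⟩ := ih h.2
          have h4 := h.1
          rw [h1, cS] at h4
          refine ⟨σ i z, by simp only [act, h1, pS], ?_⟩
          rw [hσ i z h4, mkt, mul_smul, ← h2]
    intro L h1 h2
    obtain ⟨z, h3, h4⟩ := key L h2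
    rw [h1] at h3
    have h5 : base = FreeGroup.mk L • base := by
      rw [← h4, ← Option.some.inj h3]
    change ((1 : FreeGroup ι) : FreeGroup ι ⧸ D)
      = ((FreeGroup.mk L * 1 : FreeGroup ι) : FreeGroup ι ⧸ D) at h5
    rw [mul_one, QuotientGroup.eq] at h5
    simpa using h5

theorem map_tm {ι : Type} (L : List (ι × Bool)) :
    FreeGroup.map (fun i : ι => (i, false)) (FreeGroup.mk L) = FreeGroup.mk (L.map tm) := by
  rw [FreeGroup.map.mk]
  rfl

/-- The monomial representation separating `D`. -/
theorem exists_mono {ι : Type} [Finite ι] [Nontrivial ι] (D : Subgroup (FreeGroup ι))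
    (hD : D.FG) :
    ∃ (V : Type) (_ : Fintype V) (_ : DecidableEq V) (o b : V)
      (M : FreeGroup ι →* (Matrix V V (Matrix (Fin 2) (Fin 2) ℚ))ˣ),
      (∀ γ γ', (M γ).1 o o = (M γ').1 o o → γ = γ') ∧
      (∀ γ, γ ∈ D ↔ (M γ).1 b b = (M γ).1 o o) := by
  classical
  obtain ⟨S, hS, hfin⟩ := (Subgroup.fg_iff D).1 hD
  obtain ⟨V, iF, iD, p, c, o, b, ho, hb, hb'⟩ := exists_graph D S hfin
    (by rw [← hS]; exact Subgroup.subset_closure)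
  obtain ⟨U, hU⟩ := free_faithful (ι := ι × Bool)
  let M := FreeGroup.lift (mono p c U)
  let T : FreeGroup ι →* (Matrix (Fin 2) (Fin 2) ℚ)ˣ :=
    (FreeGroup.lift U).comp (FreeGroup.map (fun i : ι => (i, false)))
  have hTi : Function.Injective T :=
    hU.comp (FreeGroup.map_injective (fun i j h => (Prod.mk.inj h).1))
  have hTmk : ∀ L, T (FreeGroup.mk L) = FreeGroup.lift U (FreeGroup.mk (L.map tm)) := by
    intro L
    simp only [T, MonoidHom.comp_apply, map_tm]
  have hMo : ∀ γ, (M γ).1 o o = (T γ).1 := by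
    intro γ
    have := mono_mk p c U γ.toWord o o
    rw [(ho _).1, (ho _).2, if_pos rfl, ← hTmk, FreeGroup.mk_toWord] at this
    exact this
  let H : Subgroup (FreeGroup ι) :=
    { carrier := {γ | ∀ y, (M γ).1 y b = if y = b then (T γ).1 else 0}
      one_mem' := by
        intro y
        simp [Matrix.one_apply]
      mul_mem' := by
        intro γ δ h1 h2 y
        simp only [Set.mem_ofPred_eq] at h1 h2
        rw [map_mul, map_mul, Units.val_mul, Matrix.mul_apply]
        simp only [h2, mul_ite, mul_zero, Finset.sum_ite_eq', Finset.mem_univ, if_true, h1]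
        simp
      inv_mem' := by
        intro γ h1 y
        simp only [Set.mem_ofPred_eq] at h1
        have h2 : ((M γ⁻¹).1 * (M γ).1) y b = (1 : Matrix V V _) y b := by
          rw [← Units.val_mul, ← map_mul]
          simp
        rw [Matrix.mul_apply] at h2
        simp only [h1, mul_ite, mul_zero, Finset.sum_ite_eq', Finset.mem_univ, if_true] at h2
        rw [← Units.eq_mul_inv_iff_mul_eq] at h2
        rw [h2, map_inv, Matrix.one_apply]
        simp }
  have hDH : D ≤ H := by
    rw [← hS, Subgroup.closure_le]
    intro s hs y
    have := mono_mk p c U s.toWord y b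
    rw [(hb s hs).1, (hb s hs).2, ← hTmk, FreeGroup.mk_toWord] at this
    exact this
  refine ⟨V, iF, iD, o, b, M, ?_, ?_⟩
  · intro γ γ' h
    rw [hMo, hMo] at h
    exact hTi (Units.ext h)
  · intro γ
    constructor
    · intro h
      rw [hMo, hDH h b, if_pos rfl]
    · intro h
      have h1 := mono_mk p c U γ.toWord b b
      have h2 : (T γ).1 ≠ 0 := (T γ).ne_zero
      rw [hMo] at h
      rw [FreeGroup.mk_toWord] at h1
      change (M γ).1 b b = _ at h1
      rw [h] at h1
      split_ifs at h1 with h3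
      · have h4 := Units.ext h1
        rw [← FreeGroup.mk_toWord (x := γ), hTmk, FreeGroup.mk_toWord (x := γ)] at h4
        have h5 := FreeGroup.reduce.sound (hU h4)
        have r0 : FreeGroup.IsReduced γ.toWord := FreeGroup.isReduced_toWord
        have r1 : FreeGroup.IsReduced (γ.toWord.map tm) := by
          apply reduced_of_map
          rw [List.map_map]
          convert r0
          exact List.map_id _
        have r2 : FreeGroup.IsReduced (lab p c γ.toWord b) := by
          apply reduced_of_map
          rw [lab_unmark]
          exact r0
        rw [r1.reduce_eq, r2.reduce_eq] at h5
        have := hb' γ.toWord h3.symm h5.symm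
        rwa [FreeGroup.mk_toWord] at this
      · exact absurd h1 h2

end FreeZar

open FreeZar in
/-- Refinement of Theorem 1.1 (free case): the separating faithful representation can be
chosen with all matrix entries algebraic over `ℚ`. -/
theorem free_subgroup_zariski_closed_algebraic (r : ℕ) (hr : 2 ≤ r)
    (Δ₀ : Subgroup (FreeGroup (Fin r))) (hΔ₀ : Δ₀.FG) :
    ∃ (n : ℕ) (ρ : FreeGroup (Fin r) →* GL (Fin n) ℂ), 1 ≤ n ∧
      Function.Injective ρ ∧
      (∀ (γ : FreeGroup (Fin r)) (i j : Fin n),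
        IsAlgebraic ℚ ((ρ γ : Matrix (Fin n) (Fin n) ℂ) i j)) ∧
      ∀ γ : FreeGroup (Fin r), γ ∉ Δ₀ →
        ∃ P : MvPolynomial (Fin n × Fin n) ℂ,
          (∀ δ ∈ Δ₀, evalAtGL (ρ δ) P = 0) ∧ evalAtGL (ρ γ) P ≠ 0 := by
  have : Nontrivial (Fin r) := Fin.nontrivial_iff_two_le.2 hr
  obtain ⟨V, iF, iD, o, b, M, h1, h2⟩ := exists_mono Δ₀ hΔ₀
  let e := Fintype.equivFin (V × Fin 2)
  let Φ : Matrix V V (Matrix (Fin 2) (Fin 2) ℚ) →+*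
      Matrix (Fin (Fintype.card (V × Fin 2))) (Fin (Fintype.card (V × Fin 2))) ℂ :=
    ((Matrix.reindexAlgEquiv ℂ ℂ e).toRingEquiv.toRingHom.comp
      (algebraMap ℚ ℂ).mapMatrix).comp (Matrix.compRingEquiv V (Fin 2) ℚ).toRingHom
  have hΦ : ∀ A i j, Φ A i j =
      algebraMap ℚ ℂ (A (e.symm i).1 (e.symm j).1 (e.symm i).2 (e.symm j).2) := by
    intro A i j
    rfl
  let ρ : FreeGroup (Fin r) →* GL (Fin (Fintype.card (V × Fin 2))) ℂ :=
    (Units.map Φ.toMonoidHom).comp M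
  have hρ : ∀ γ i j, (ρ γ).1 i j =
      algebraMap ℚ ℂ ((M γ).1 (e.symm i).1 (e.symm j).1 (e.symm i).2 (e.symm j).2) :=
    fun γ i j => hΦ _ i j
  have hρ' : ∀ γ x y s t, (ρ γ).1 (e (x, s)) (e (y, t)) =
      algebraMap ℚ ℂ ((M γ).1 x y s t) := by
    intro γ x y s t
    rw [hρ]
    simp
  refine ⟨_, ρ, Fintype.card_pos_iff.2 ⟨(o, 0)⟩, ?_, ?_, ?_⟩
  · intro γ γ' h
    apply h1
    ext s t
    apply (algebraMap ℚ ℂ).injective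
    rw [← hρ', ← hρ', h]
  · intro γ i j
    rw [hρ]
    exact isAlgebraic_algebraMap _
  · intro γ hγ
    rw [h2] at hγ
    have : ∃ s t, (M γ).1 b b s t ≠ (M γ).1 o o s t := by
      by_contra hcon
      push Not at hcon
      exact hγ (Matrix.ext hcon)
    obtain ⟨s, t, hst⟩ := this
    refine ⟨MvPolynomial.X (e (b, s), e (b, t)) - MvPolynomial.X (e (o, s), e (o, t)), ?_, ?_⟩
    · intro δ hδ
      rw [h2] at hδ
      simp only [evalAtGL, map_sub, MvPolynomial.eval_X]
      rw [hρ', hρ', hδ, sub_self]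
    · simp only [evalAtGL, map_sub, MvPolynomial.eval_X]
      rw [hρ', hρ', sub_ne_zero]
      exact fun h => hst ((algebraMap ℚ ℂ).injective h)
end
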